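/- arXiv:1704.05381 — 5 statements merged into one kernel-verified Lean document; each statement's English description precedes it below -/
import Mathlib

section
/- For f : bD → ℂ the restriction to bD of a continuously differentiable function on ℂ², let 𝒞f : bD → ℂ denote the boundary value of the Cauchy–Leray integral, i.e. 𝒞f(z) = lim_{ε→0⁺} ∫_{bD} f(w)·Δ(w, z+εN(z))^{−2} dH³(w) (this limit exists uniformly in z ∈ bD). Then for every p ∈ [1,∞] there is no constant A < ∞ such that ‖𝒞f‖_{L^p(bD, H³)} ≤ A·‖f‖_{L^p(bD, H³)} holds for all such f; in particular f ↦ 𝒞f does not extend to a bounded operator on L^p(bD, H³) for any 1 ≤ p ≤ ∞. -/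
open MeasureTheory Complex
open scoped ENNReal

noncomputable section

/-- `ℂ²` with the Euclidean metric. -/
abbrev C2 := EuclideanSpace ℂ (Fin 2)

instance : MeasurableSpace C2 := borel _
instance : BorelSpace C2 := ⟨rfl⟩

/-- The defining function `ρ(z) = |z₂|² + (Re z₁)² + (Im z₁)⁴ − 1`. -/
def rho (z : C2) : ℝ := ‖z 1‖ ^ 2 + (z 0).re ^ 2 + (z 0).im ^ 4 - 1

/-- The boundary `bD = {ρ = 0}`. -/
def bD : Set C2 := {z | rho z = 0}

/-- The Cauchy–Leray denominator
`Δ(w,z) = (u₁ − 2i v₁³)(w₁ − z₁) + conj(w₂)(w₂ − z₂)`. -/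
def Delta (w z : C2) : ℂ :=
  (((w 0).re : ℂ) - 2 * I * ((w 0).im : ℂ) ^ 3) * (w 0 - z 0)
    + (starRingEnd ℂ) (w 1) * (w 1 - z 1)
/-- The real gradient `∇ρ` of `ρ` on `ℝ⁴ ≅ ℂ²`, written as a vector in `ℂ²`:
`∇ρ(z) = (2u₁ + 4v₁³ i, 2z₂)`. -/
def gradRho (z : C2) : C2 :=
  (WithLp.equiv 2 (Fin 2 → ℂ)).symm
    ![(2 * (z 0).re : ℝ) + (4 * (z 0).im ^ 3 : ℝ) * I, 2 * z 1]

/-- The inward unit normal `N(z) = −∇ρ(z)/|∇ρ(z)|`. -/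
def Nvec (z : C2) : C2 := (-‖gradRho z‖⁻¹ : ℝ) • gradRho z
/-- The Cauchy–Leray integral of `f` evaluated at the point `z + εN(z)`. -/
def CL (f : C2 → ℂ) (ε : ℝ) (z : C2) : ℂ :=
  ∫ w in bD, f w / (Delta w (z + ε • Nvec z)) ^ 2 ∂μH[3]

/-- `Cf` is the boundary value of the Cauchy–Leray integral of `f`:
`Cf(z) = lim_{ε→0⁺} ∫_{bD} f(w)·Δ(w, z+εN(z))⁻² dH³(w)`, uniformly in `z ∈ bD`. -/
def IsCLBoundaryValue (f Cf : C2 → ℂ) : Prop :=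
  TendstoUniformlyOn (fun ε z => CL f ε z) Cf (nhdsWithin 0 (Set.Ioi 0)) bD

section Area
open Module Set Filter Topology
open scoped NNReal

theorem hm_image_le {X Y Z : Type*} [MetricSpace Y] [MetricSpace Z]
    [MeasurableSpace Y] [BorelSpace Y] [MeasurableSpace Z] [BorelSpace Z]
    (f : X → Y) (g : X → Z) (K : ℝ≥0) (A : Set X)
    (h : ∀ a ∈ A, ∀ b ∈ A, dist (f a) (f b) ≤ K * dist (g a) (g b)) {d : ℝ} (hd : 0 ≤ d) :
    μH[d] (f '' A) ≤ (K : ℝ≥0∞) ^ d * μH[d] (g '' A) := by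
  rcases A.eq_empty_or_nonempty with rfl | ⟨x0, hx0⟩
  · simp
  have : Nonempty X := ⟨x0⟩
  set H : Z → Y := fun z => f (Function.invFunOn g A z) with hH
  have key : ∀ a ∈ A, H (g a) = f a := by
    intro a ha
    have h1 : Function.invFunOn g A (g a) ∈ A := Function.invFunOn_mem ⟨a, ha, rfl⟩
    have h2 : g (Function.invFunOn g A (g a)) = g a := Function.invFunOn_eq ⟨a, ha, rfl⟩
    have := h _ h1 _ ha
    rw [h2, dist_self, mul_zero] at this
    exact dist_le_zero.1 this
  have himg : f '' A = H '' (g '' A) := by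
    rw [image_image]
    exact image_congr fun a ha => (key a ha).symm
  rw [himg]
  refine LipschitzOnWith.hausdorffMeasure_image_le ?_ hd
  refine LipschitzOnWith.of_dist_le_mul ?_
  rintro _ ⟨a, ha, rfl⟩ _ ⟨b, hb, rfl⟩
  rw [key a ha, key b hb]
  exact h a ha b hb

theorem measure_le_of_locally {E : Type*} [TopologicalSpace E] [SecondCountableTopology E]
    [MeasurableSpace E] [BorelSpace E] (ν₁ ν₂ : Measure E) (U : Set E)
    (h : ∀ x ∈ U, ∃ V : Set E, IsOpen V ∧ x ∈ V ∧ ∀ A ⊆ V ∩ U, MeasurableSet A → ν₁ A ≤ ν₂ A)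
    (A : Set E) (hA : MeasurableSet A) (hAU : A ⊆ U) : ν₁ A ≤ ν₂ A := by
  rcases U.eq_empty_or_nonempty with rfl | ⟨x0, hx0⟩
  · have : A = ∅ := subset_empty_iff.1 hAU
    simp [this]
  choose! V hVo hxV hV using h
  obtain ⟨t, htU, htc, hcov⟩ := TopologicalSpace.countable_cover_nhdsWithin
    (f := V) (s := U) (fun x hx => mem_nhdsWithin_of_mem_nhds ((hVo x hx).mem_nhds (hxV x hx)))
  have htne : t.Nonempty := by
    obtain ⟨x, hx⟩ := mem_iUnion.1 (hcov hx0)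
    obtain ⟨hx, _⟩ := mem_iUnion.1 hx
    exact ⟨x, hx⟩
  obtain ⟨e, he⟩ := htc.exists_eq_range htne
  have heU : ∀ n, e n ∈ U := fun n => htU (he ▸ mem_range_self n)
  set W : ℕ → Set E := fun n => V (e n) with hW
  have hWm : ∀ n, MeasurableSet (W n) := fun n => (hVo _ (heU n)).measurableSet
  have hdm : ∀ n, MeasurableSet (disjointed W n) := fun n => MeasurableSet.disjointed hWm n
  have hAeq : A = ⋃ n, A ∩ disjointed W n := by
    rw [← inter_iUnion, iUnion_disjointed, eq_comm, inter_eq_left]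
    intro x hx
    obtain ⟨y, hy⟩ := mem_iUnion.1 (hcov (hAU hx))
    obtain ⟨hyt, hy⟩ := mem_iUnion.1 hy
    rw [he] at hyt
    obtain ⟨n, rfl⟩ := hyt
    exact mem_iUnion.2 ⟨n, hy⟩
  have hdisj : Pairwise (Function.onFun Disjoint fun n => A ∩ disjointed W n) := by
    intro i j hij
    exact (disjoint_disjointed W hij).mono inter_subset_right inter_subset_right
  rw [hAeq, measure_iUnion hdisj (fun n => hA.inter (hdm n)),
    measure_iUnion hdisj (fun n => hA.inter (hdm n))]
  refine ENNReal.tsum_le_tsum fun n => ?_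
  refine hV (e n) (heU n) _ ?_ (hA.inter (hdm n))
  intro x hx
  exact ⟨disjointed_subset W n hx.2, hAU hx.1⟩

variable {E F : Type*} [NormedAddCommGroup E] [InnerProductSpace ℝ E] [FiniteDimensional ℝ E]
  [MeasurableSpace E] [BorelSpace E]
  [NormedAddCommGroup F] [InnerProductSpace ℝ F]
  [MeasurableSpace F] [BorelSpace F]

theorem area_nhds {Φ : E → F} {L : E →L[ℝ] F} {x : E} (hd : HasStrictFDerivAt Φ L x)
    (hL : Function.Injective L) {K : ℝ≥0} (hK : 1 < K) :
    ∃ V : Set E, IsOpen V ∧ x ∈ V ∧ ∀ a ∈ V, ∀ b ∈ V,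
      dist (Φ a) (Φ b) ≤ K * dist (L a) (L b) ∧ dist (L a) (L b) ≤ K * dist (Φ a) (Φ b) := by
  obtain ⟨c, hc0, hc⟩ := (LinearMap.exists_antilipschitzWith (L : E →ₗ[ℝ] F)
    (LinearMap.ker_eq_bot.2 hL))
  have hcb : ∀ v, ‖v‖ ≤ c * ‖L v‖ := fun v => by
    simpa using hc.le_mul_dist v 0
  set δ : ℝ := 1 - (K : ℝ)⁻¹ with hδ
  have hK' : (1 : ℝ) < K := by exact_mod_cast hK
  have hδ0 : 0 < δ := by
    rw [hδ, sub_pos]; exact inv_lt_one_of_one_lt₀ hK'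
  have hc0' : (0 : ℝ) < c := by exact_mod_cast hc0
  have hev := hd.isLittleO.def (c := δ / c) (by positivity)
  rw [eventually_nhds_iff] at hev
  obtain ⟨S, hS, hSo, hxS⟩ := hev
  obtain ⟨V1, V2, h1o, hx1, h2o, hx2, hsub⟩ := mem_nhds_prod_iff'.1 (hSo.mem_nhds hxS)
  refine ⟨V1 ∩ V2, h1o.inter h2o, ⟨hx1, hx2⟩, ?_⟩
  intro a ha b hb
  have hab := hS (a, b) (hsub ⟨ha.1, hb.2⟩)
  simp only at hab
  have h2 : ‖Φ a - Φ b - L (a - b)‖ ≤ δ * ‖L (a - b)‖ := by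
    refine hab.trans ?_
    rw [div_mul_eq_mul_div, div_le_iff₀ hc0']
    nlinarith [hcb (a - b)]
  rw [dist_eq_norm, dist_eq_norm, ← map_sub]
  have hKi : δ = 1 - (K : ℝ)⁻¹ := rfl
  have hKK : (K : ℝ) * (K : ℝ)⁻¹ = 1 := mul_inv_cancel₀ (by positivity)
  have hn := norm_nonneg (L (a - b))
  constructor
  · have : ‖Φ a - Φ b‖ ≤ (1 + δ) * ‖L (a - b)‖ := by
      have := norm_le_norm_add_norm_sub' (Φ a - Φ b) (L (a - b))
      linarith
    refine this.trans (mul_le_mul_of_nonneg_right ?_ hn)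
    have hi : 0 < (K : ℝ)⁻¹ := by positivity
    nlinarith [sq_nonneg ((K : ℝ) - 1)]
  · have : (1 - δ) * ‖L (a - b)‖ ≤ ‖Φ a - Φ b‖ := by
      have := norm_le_norm_add_norm_sub (Φ a - Φ b) (L (a - b))
      linarith
    have h3 : (1 - δ) = (K : ℝ)⁻¹ := by rw [hKi]; ring
    rw [h3] at this
    calc ‖L (a - b)‖ = K * ((K : ℝ)⁻¹ * ‖L (a - b)‖) := by rw [← mul_assoc, hKK, one_mul]
      _ ≤ _ := by gcongr

theorem area_formula {Φ : E → F} {U : Set E} (hU : IsOpen U)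
    {L : E → E →L[ℝ] F}
    (hd : ∀ x ∈ U, HasStrictFDerivAt Φ (L x) x) (hL : ∀ x ∈ U, Function.Injective (L x))
    (hinj : InjOn Φ U)
    (hJ : ContinuousOn (fun x => (L x : E →ₗ[ℝ] F).normDet) U) :
    (μH[finrank ℝ E] : Measure F).restrict (Φ '' U) =
      (((μH[finrank ℝ E] : Measure E).withDensity
        (fun x => ENNReal.ofReal ((L x : E →ₗ[ℝ] F).normDet))).restrict U).map Φ := by
  set n := finrank ℝ E
  set J : E → ℝ := fun x => (L x : E →ₗ[ℝ] F).normDet with hJdef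
  have hΦc : ContinuousOn Φ U := fun x hx => (hd x hx).hasFDerivAt.continuousAt.continuousWithinAt
  have hemb : MeasurableEmbedding (U.domRestrict Φ) :=
    hΦc.measurableEmbedding hU.measurableSet hinj
  have hJpos : ∀ x ∈ U, 0 < J x := by
    intro x hx
    refine lt_of_le_of_ne (LinearMap.normDet_nonneg _) (Ne.symm ?_)
    rw [Ne, LinearMap.normDet_eq_zero_iff_ker_ne_bot, not_not]
    exact LinearMap.ker_eq_bot.2 (hL x hx)
  set ν₁ : Measure E := ((μH[n] : Measure F).comap (U.domRestrict Φ)).map (Subtype.val) with hν₁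
  set ν₂ : Measure E := (μH[n] : Measure E).withDensity (fun x => ENNReal.ofReal (J x)) with hν₂
  have hν₁A : ∀ A, MeasurableSet A → ν₁ A = μH[n] (Φ '' (A ∩ U)) := by
    intro A hA
    rw [hν₁, Measure.map_apply measurable_subtype_coe hA, hemb.comap_apply]
    congr 1
    ext y
    simp only [mem_image, mem_preimage, Subtype.exists, mem_inter_iff]
    constructor
    · rintro ⟨a, ha, h1, h2⟩; exact ⟨a, ⟨h1, ha⟩, h2⟩
    · rintro ⟨a, ⟨h1, ha⟩, h2⟩; exact ⟨a, ha, h1, h2⟩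
  have hloc : ∀ K : ℝ≥0, 1 < K → ∀ x ∈ U, ∃ V : Set E, IsOpen V ∧ x ∈ V ∧
      ∀ A ⊆ V ∩ U, MeasurableSet A → ν₁ A ≤ (K ^ (n + 1) : ℝ≥0) * ν₂ A ∧
        ν₂ A ≤ (K ^ (n + 1) : ℝ≥0) * ν₁ A := by
    intro K hK x hx
    obtain ⟨V, hVo, hxV, hV⟩ := area_nhds (hd x hx) (hL x hx) hK
    have hK' : (1 : ℝ) < K := by exact_mod_cast hK
    have hJx := hJpos x hx
    have hJc : ContinuousAt J x := hJ.continuousAt (hU.mem_nhds hx)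
    have e1 : ∀ᶠ y in 𝓝 x, J y < K * J x := hJc.eventually_lt_const (by nlinarith)
    have e2 : ∀ᶠ y in 𝓝 x, J x < K * J y := by
      have : ContinuousAt (fun y => (K : ℝ) * J y) x := continuousAt_const.mul hJc
      exact this.eventually_const_lt (by nlinarith)
    obtain ⟨V', hV', hVo', hxV'⟩ := eventually_nhds_iff.1 (e1.and e2)
    refine ⟨V ∩ V', hVo.inter hVo', ⟨hxV, hxV'⟩, ?_⟩
    intro A hA hAm
    have hAU : A ∩ U = A := inter_eq_left.2 fun y hy => (hA hy).2
    have hlin : μH[n] (L x '' A) = ENNReal.ofReal (J x) * μH[n] A :=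
      LinearMap.hausdorffMeasure_image (L x : E →ₗ[ℝ] F) A
    have i1 : μH[n] (Φ '' A) ≤ (K : ℝ≥0∞) ^ (n : ℝ) * μH[n] (L x '' A) :=
      hm_image_le Φ (L x) K A (fun a ha b hb => (hV a (hA ha).1.1 b (hA hb).1.1).1) (by positivity)
    have i2 : μH[n] (L x '' A) ≤ (K : ℝ≥0∞) ^ (n : ℝ) * μH[n] (Φ '' A) :=
      hm_image_le (L x) Φ K A (fun a ha b hb => (hV a (hA ha).1.1 b (hA hb).1.1).2) (by positivity)
    rw [hlin, ENNReal.rpow_natCast] at i1 i2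
    have hKJ : ∀ s t : ℝ, s < K * t → ENNReal.ofReal s ≤ (K : ℝ≥0∞) * ENNReal.ofReal t := by
      intro s t hst
      rw [← ENNReal.ofReal_coe_nnreal, ← ENNReal.ofReal_mul (by positivity)]
      exact ENNReal.ofReal_le_ofReal hst.le
    have hν₂A : ν₂ A = ∫⁻ y in A, ENNReal.ofReal (J y) ∂μH[n] := by
      rw [hν₂, withDensity_apply _ hAm]
    have j1 : ENNReal.ofReal (J x) * μH[n] A ≤ K * ν₂ A := by
      rw [hν₂A, ← lintegral_const_mul' _ _ ENNReal.coe_ne_top, ← setLIntegral_const]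
      exact setLIntegral_mono' hAm fun y hy => hKJ _ _ (hV' y (hA hy).1.2).2
    have j2 : ν₂ A ≤ K * (ENNReal.ofReal (J x) * μH[n] A) := by
      rw [hν₂A, ← mul_assoc, ← setLIntegral_const]
      exact setLIntegral_mono' hAm fun y hy => hKJ _ _ (hV' y (hA hy).1.2).1
    rw [hν₁A A hAm, hAU]
    push_cast
    constructor
    · calc _ ≤ _ := i1
        _ ≤ K ^ n * (K * ν₂ A) := by gcongr
        _ = _ := by ring
    · calc _ ≤ _ := j2
        _ ≤ K * (K ^ n * μH[n] (Φ '' A)) := by gcongr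
        _ = _ := by ring
  have hglob : ∀ A, MeasurableSet A → A ⊆ U → ν₁ A = ν₂ A := by
    intro A hA hAU
    have lim : ∀ c : ℝ≥0∞, Tendsto (fun K : ℝ≥0 => ((K ^ (n + 1) : ℝ≥0) : ℝ≥0∞) * c) (𝓝[>] 1)
        (𝓝 c) := by
      intro c
      have h1 : Tendsto (fun K : ℝ≥0 => ((K ^ (n + 1) : ℝ≥0) : ℝ≥0∞)) (𝓝[>] 1) (𝓝 1) := by
        have : Continuous (fun K : ℝ≥0 => ((K ^ (n + 1) : ℝ≥0) : ℝ≥0∞)) := by fun_prop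
        have := this.tendsto 1
        simp only [one_pow, ENNReal.coe_one] at this
        exact this.mono_left nhdsWithin_le_nhds
      simpa using ENNReal.Tendsto.mul_const h1 (Or.inl one_ne_zero)
    apply le_antisymm
    · refine ge_of_tendsto (lim (ν₂ A)) ?_
      filter_upwards [self_mem_nhdsWithin] with K hK
      refine measure_le_of_locally ν₁ ((K ^ (n + 1) : ℝ≥0) • ν₂) U ?_ A hA hAU
      intro x hx
      obtain ⟨V, h1, h2, h3⟩ := hloc K hK x hx
      exact ⟨V, h1, h2, fun A hA hAm => (h3 A hA hAm).1⟩
    · refine ge_of_tendsto (lim (ν₁ A)) ?_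
      filter_upwards [self_mem_nhdsWithin] with K hK
      refine measure_le_of_locally ν₂ ((K ^ (n + 1) : ℝ≥0) • ν₁) U ?_ A hA hAU
      intro x hx
      obtain ⟨V, h1, h2, h3⟩ := hloc K hK x hx
      exact ⟨V, h1, h2, fun A hA hAm => (h3 A hA hAm).2⟩
  have hΦae : AEMeasurable Φ (ν₂.restrict U) :=
    hΦc.aemeasurable hU.measurableSet
  ext B hB
  rw [Measure.map_apply_of_aemeasurable hΦae hB, Measure.restrict_apply hB,
    Measure.restrict_apply₀' hU.measurableSet.nullMeasurableSet]
  have hm : MeasurableSet (Φ ⁻¹' B ∩ U) := by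
    have : Φ ⁻¹' B ∩ U = Subtype.val '' ((U.domRestrict Φ) ⁻¹' B) := by
      ext y; simp [and_comm, Set.domRestrict]
    rw [this]
    exact hU.measurableSet.subtype_image (hemb.measurable hB)
  rw [← hglob _ hm inter_subset_right, hν₁A _ hm]
  congr 1
  ext y
  simp only [mem_inter_iff, mem_image, mem_preimage]
  constructor
  · rintro ⟨h1, a, ha, rfl⟩; exact ⟨a, ⟨⟨h1, ha⟩, ha⟩, rfl⟩
  · rintro ⟨a, ⟨⟨h1, ha⟩, _⟩, rfl⟩; exact ⟨h1, a, ha, rfl⟩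

end Area

section IBP
open Module Set Filter Topology
open scoped NNReal

abbrev E3 := EuclideanSpace ℝ (Fin 3)

def gsing (R s : ℝ) : ℝ := (Icc (-R) R).indicator (fun s => |s| ^ (-(4/5) : ℝ)) s

theorem gsing_integrable (R : ℝ) : Integrable (gsing R) := by
  unfold gsing
  change Integrable (fun s => (Icc (-R) R).indicator (fun s => |s| ^ (-(4/5) : ℝ)) s)
  rw [integrable_indicator_iff measurableSet_Icc]
  rcases lt_or_ge R 0 with hR | hR
  · rw [Icc_eq_empty (by linarith)]; exact integrableOn_empty
  have h1 : IntegrableOn (fun s : ℝ => |s| ^ (-(4/5) : ℝ)) (Ioc 0 R) := by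
    have := (intervalIntegral.intervalIntegrable_rpow' (a := 0) (b := R)
      (r := -(4/5)) (by norm_num)).1
    refine this.congr_fun ?_ measurableSet_Ioc
    intro s hs
    simp only [abs_of_pos hs.1]
  have h2 : IntegrableOn (fun s : ℝ => |s| ^ (-(4/5) : ℝ)) (Ico (-R) 0) := by
    have := h1.comp_neg
    simpa using this
  have h3 := (h2.union (integrableOn_singleton (μ := volume) (f := fun s : ℝ => |s| ^ (-(4/5) : ℝ)) (x := 0)
    (by simp) (by simp))).union h1
  refine h3.mono_set ?_
  intro s hs
  rcases lt_trichotomy s 0 with h | h | h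
  · exact Or.inl (Or.inl ⟨hs.1, h⟩)
  · exact Or.inl (Or.inr h)
  · exact Or.inr ⟨h, hs.2⟩

theorem gprod_integrable (μ : Measure E3) [μ.IsAddHaarMeasure] (R : ℝ) :
    Integrable (fun y : E3 => ∏ i, gsing R (y i)) μ := by
  have h1 : Integrable (fun y : Fin 3 → ℝ => ∏ i, gsing R (y i)) :=
    Integrable.fintype_prod (fun _ => gsing_integrable R)
  have h2 : Integrable (fun y : E3 => ∏ i, gsing R (y i)) volume := by
    have := (EuclideanSpace.volume_preserving_symm_measurableEquiv_toLp (Fin 3)).integrable_comp_of_integrable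
      h1
    exact this
  rw [Measure.isAddLeftInvariant_eq_smul μ (volume : Measure E3)]
  exact h2.smul_measure ENNReal.coe_ne_top

theorem ae_coord_ne (μ : Measure E3) [μ.IsAddHaarMeasure] : ∀ᵐ y ∂μ, ∀ i, y i ≠ 0 := by
  rw [ae_all_iff]
  intro i
  set S : Submodule ℝ E3 := LinearMap.ker (EuclideanSpace.proj i : E3 →L[ℝ] ℝ).toLinearMap with hS
  have : μ (S : Set E3) = 0 := by
    refine Measure.addHaar_submodule μ S ?_
    intro h
    have : (EuclideanSpace.single i (1:ℝ)) ∈ S := by rw [h]; trivial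
    simp [hS] at this
  rw [ae_iff]
  refine measure_mono_null ?_ this
  intro y hy
  simpa [hS] using hy

theorem cont_of_compact {h : E3 → ℂ} {K : Set E3} (hK : IsCompact K)
    (h0 : ∀ x ∉ K, h x = 0) (hc : ∀ x ∈ K, ContinuousAt h x) :
    Continuous h ∧ HasCompactSupport h := by
  have hs : tsupport h ⊆ K := by
    refine closure_minimal ?_ hK.isClosed
    intro x hx
    by_contra hxK
    exact hx (h0 x hxK)
  exact ⟨continuous_of_tsupport fun x hx => hc x (hs hx), HasCompactSupport.intro hK h0⟩

def aff (a b₁ b₂ : E3 → ℂ) (x : E3) (z : C2) : ℂ := a x - b₁ x * z 0 - b₂ x * z 1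

def dd (e : E3) (a : E3 → ℂ) (x : E3) : ℂ := fderiv ℝ a x e

theorem aff_contAt {a b₁ b₂ : E3 → ℂ} {x : E3} (ha : ContinuousAt a x) (h1 : ContinuousAt b₁ x)
    (h2 : ContinuousAt b₂ x) (z : C2) :
    ContinuousAt (fun p : E3 × C2 => aff a b₁ b₂ p.1 p.2) (x, z) := by
  unfold aff
  have f1 : ContinuousAt (fun p : E3 × C2 => p.1) (x, z) := continuousAt_fst
  have ha' : ContinuousAt (fun p : E3 × C2 => a p.1) (x, z) := ContinuousAt.comp (g := a) ha f1
  have h1' : ContinuousAt (fun p : E3 × C2 => b₁ p.1) (x, z) := ContinuousAt.comp (g := b₁) h1 f1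
  have h2' : ContinuousAt (fun p : E3 × C2 => b₂ p.1) (x, z) := ContinuousAt.comp (g := b₂) h2 f1
  have z0 : ContinuousAt (fun p : E3 × C2 => p.2 0) (x, z) := by fun_prop
  have z1 : ContinuousAt (fun p : E3 × C2 => p.2 1) (x, z) := by fun_prop
  exact (ha'.sub (h1'.mul z0)).sub (h2'.mul z1)

theorem aff_hasFDerivAt {a b₁ b₂ : E3 → ℂ} {x : E3} (ha : DifferentiableAt ℝ a x)
    (h1 : DifferentiableAt ℝ b₁ x) (h2 : DifferentiableAt ℝ b₂ x) (z : C2) :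
    ∃ L : E3 →L[ℝ] ℂ, HasFDerivAt (fun x => aff a b₁ b₂ x z) L x ∧
      ∀ e, L e = aff (dd e a) (dd e b₁) (dd e b₂) x z := by
  refine ⟨_, (ha.hasFDerivAt.sub (h1.hasFDerivAt.mul_const (z 0))).sub
    (h2.hasFDerivAt.mul_const (z 1)), ?_⟩
  intro e
  simp [aff, dd, mul_comm]

theorem dd_contDiffAt {a : E3 → ℂ} {x : E3} {n : ℕ} (ha : ContDiffAt ℝ (n + 1 : ℕ) a x) (e : E3) :
    ContDiffAt ℝ n (dd e a) x := by
  unfold dd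
  exact (ha.fderiv_right (by norm_cast)).clm_apply contDiffAt_const

theorem my_inv {g : E3 → ℂ} {L : E3 →L[ℝ] ℂ} {x : E3} (h : HasFDerivAt g L x) (h0 : g x ≠ 0) :
    ∃ M : E3 →L[ℝ] ℂ, HasFDerivAt (fun y => (g y)⁻¹) M x ∧ ∀ e, M e = - L e / (g x)^2 := by
  have h1 := ((hasDerivAt_inv h0).hasFDerivAt.restrictScalars ℝ).comp x h
  refine ⟨_, h1, fun e => ?_⟩
  simp [div_eq_mul_inv]

theorem my_div {f g : E3 → ℂ} {L' L : E3 →L[ℝ] ℂ} {x : E3} (hf : HasFDerivAt f L' x)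
    (h : HasFDerivAt g L x) (h0 : g x ≠ 0) :
    ∃ M : E3 →L[ℝ] ℂ, HasFDerivAt (fun y => f y / g y) M x ∧
      ∀ e, M e = (L' e * g x - f x * L e) / (g x)^2 := by
  obtain ⟨M, hM, hMe⟩ := my_inv h h0
  refine ⟨f x • M + (g x)⁻¹ • L', by simp only [div_eq_mul_inv]; exact hf.mul hM, fun e => ?_⟩
  simp [hMe]
  field_simp
  try ring

set_option maxHeartbeats 2000000 in
theorem ibp_limit (μ : Measure E3) [μ.IsAddHaarMeasure] {U : Set E3} (hU : IsOpen U)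
    {a b₁ b₂ : E3 → ℂ} (ha : ∀ x ∈ U, ContDiffAt ℝ 2 a x) (hb₁ : ∀ x ∈ U, ContDiffAt ℝ 2 b₁ x)
    (hb₂ : ∀ x ∈ U, ContDiffAt ℝ 2 b₂ x) (e : E3) {G : E3 → ℂ} (hG : ContDiff ℝ 1 G)
    (hGc : HasCompactSupport G) (hGU : tsupport G ⊆ U) {z₀ : C2} {W Ds : Set C2}
    (hW : IsCompact W) (hWn : W ∈ 𝓝 z₀)
    (hq : ∀ x ∈ tsupport G, ∀ z ∈ W, aff (dd e a) (dd e b₁) (dd e b₂) x z ≠ 0)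
    {P : C2 → E3} (hP : Continuous P) {c : ℝ} (hc : 0 < c)
    (hlow : ∀ x ∈ tsupport G, ∀ z ∈ W ∩ Ds,
      c * ∏ i, |x i - P z i| ^ (4/5 : ℝ) ≤ ‖aff a b₁ b₂ x z‖)
    (hne : ∀ x ∈ tsupport G, ∀ z ∈ W ∩ Ds, aff a b₁ b₂ x z ≠ 0)
    (hne₀ : ∀ x ∈ tsupport G, x ≠ P z₀ → aff a b₁ b₂ x z₀ ≠ 0) :
    ∃ l, Tendsto (fun z => ∫ x, G x / (aff a b₁ b₂ x z) ^ 2 ∂μ) (𝓝[Ds] z₀) (𝓝 l) := by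
  set K := tsupport G with hKdef
  have hK : IsCompact K := hGc
  have hG0 : ∀ x ∉ K, G x = 0 := fun x hx => image_eq_zero_of_notMem_tsupport hx
  have hdG0 : ∀ x ∉ K, dd e G x = 0 := by
    intro x hx
    have : fderiv ℝ G x = 0 := by
      have h2 : tsupport (fderiv ℝ G) ⊆ tsupport G := tsupport_fderiv_subset ℝ
      exact image_eq_zero_of_notMem_tsupport fun h => hx (h2 h)
    simp [dd, this]
  have hdGc : Continuous (dd e G) := (hG.continuous_fderiv (by norm_num)).clm_apply continuous_const
  have hda : ∀ x ∈ U, ContDiffAt ℝ 1 (dd e a) x := fun x hx => dd_contDiffAt (n := 1) (ha x hx) e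
  have hdb₁ : ∀ x ∈ U, ContDiffAt ℝ 1 (dd e b₁) x := fun x hx => dd_contDiffAt (n := 1) (hb₁ x hx) e
  have hdb₂ : ∀ x ∈ U, ContDiffAt ℝ 1 (dd e b₂) x := fun x hx => dd_contDiffAt (n := 1) (hb₂ x hx) e
  have hdda : ∀ x ∈ U, ContDiffAt ℝ 0 (dd e (dd e a)) x := fun x hx =>
    dd_contDiffAt (n := 0) (hda x hx) e
  have hddb₁ : ∀ x ∈ U, ContDiffAt ℝ 0 (dd e (dd e b₁)) x := fun x hx =>
    dd_contDiffAt (n := 0) (hdb₁ x hx) e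
  have hddb₂ : ∀ x ∈ U, ContDiffAt ℝ 0 (dd e (dd e b₂)) x := fun x hx =>
    dd_contDiffAt (n := 0) (hdb₂ x hx) e
  set D : E3 → C2 → ℂ := aff a b₁ b₂ with hD
  set q : E3 → C2 → ℂ := aff (dd e a) (dd e b₁) (dd e b₂) with hqdef
  set q' : E3 → C2 → ℂ := aff (dd e (dd e a)) (dd e (dd e b₁)) (dd e (dd e b₂)) with hq'def
  have cD : ∀ x ∈ U, ∀ z, ContinuousAt (fun p : E3 × C2 => D p.1 p.2) (x, z) := fun x hx z =>
    aff_contAt (ha x hx).continuousAt (hb₁ x hx).continuousAt (hb₂ x hx).continuousAt z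
  have cq : ∀ x ∈ U, ∀ z, ContinuousAt (fun p : E3 × C2 => q p.1 p.2) (x, z) := fun x hx z =>
    aff_contAt (hda x hx).continuousAt (hdb₁ x hx).continuousAt (hdb₂ x hx).continuousAt z
  have cq' : ∀ x ∈ U, ∀ z, ContinuousAt (fun p : E3 × C2 => q' p.1 p.2) (x, z) := fun x hx z =>
    aff_contAt (hdda x hx).continuousAt (hddb₁ x hx).continuousAt (hddb₂ x hx).continuousAt z
  set N : E3 → C2 → ℂ := fun x z => (dd e G x * q x z - G x * q' x z) / (q x z) ^ 2 with hN
  have cN : ∀ x ∈ K, ∀ z ∈ W, ContinuousAt (fun p : E3 × C2 => N p.1 p.2) (x, z) := by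
    intro x hx z hz
    have f1 : ContinuousAt (fun p : E3 × C2 => p.1) (x, z) := continuousAt_fst
    have g1 : ContinuousAt (fun p : E3 × C2 => G p.1) (x, z) :=
      ContinuousAt.comp (g := G) hG.continuous.continuousAt f1
    have g2 : ContinuousAt (fun p : E3 × C2 => dd e G p.1) (x, z) :=
      ContinuousAt.comp (g := dd e G) hdGc.continuousAt f1
    have hxU := hGU hx
    exact ((g2.mul (cq x hxU z)).sub (g1.mul (cq' x hxU z))).div ((cq x hxU z).pow 2)
      (pow_ne_zero 2 (hq x hx z hz))
  have hN0 : ∀ x ∉ K, ∀ z, N x z = 0 := by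
    intro x hx z
    simp [hN, hG0 x hx, hdG0 x hx]
  -- bound on N
  obtain ⟨M, hM0, hM⟩ : ∃ M, 0 ≤ M ∧ ∀ x ∈ K, ∀ z ∈ W, ‖N x z‖ ≤ M := by
    have hcomp : IsCompact (K ×ˢ W) := hK.prod hW
    have hco : ContinuousOn (fun p : E3 × C2 => N p.1 p.2) (K ×ˢ W) := fun p hp =>
      (cN p.1 hp.1 p.2 hp.2).continuousWithinAt
    obtain ⟨M, hM⟩ := hcomp.exists_bound_of_continuousOn hco
    exact ⟨max M 0, le_max_right _ _, fun x hx z hz => (hM (x, z) ⟨hx, hz⟩).trans (le_max_left _ _)⟩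
  -- bound on the coordinates
  obtain ⟨R, hR⟩ : ∃ R, ∀ x ∈ K, ∀ z ∈ W, ∀ i, |x i - P z i| ≤ R := by
    have hcomp : IsCompact (K ×ˢ W) := hK.prod hW
    have hco : Continuous (fun p : E3 × C2 => p.1 - P p.2) := by fun_prop
    obtain ⟨R, hR⟩ := hcomp.exists_bound_of_continuousOn hco.continuousOn
    refine ⟨R, fun x hx z hz i => ?_⟩
    have h1 := PiLp.norm_apply_le (x - P z) i
    have h2 := hR (x, z) ⟨hx, hz⟩
    simpa using h1.trans h2
  -- integration by parts
  have hibp : ∀ z ∈ W ∩ Ds, ∫ x, G x / (D x z) ^ 2 ∂μ = ∫ x, N x z / D x z ∂μ := by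
    intro z hz
    have sl : ∀ {h : E3 × C2 → ℂ} {x : E3}, ContinuousAt h (x, z) →
        ContinuousAt (fun y => h (y, z)) x := fun {h x} hh =>
      ContinuousAt.comp (f := fun y : E3 => (y, z)) (g := h) hh (by fun_prop)
    have sD : ∀ x ∈ K, ContinuousAt (fun x => D x z) x := fun x hx => sl (cD x (hGU hx) z)
    have sq : ∀ x ∈ K, ContinuousAt (fun x => q x z) x := fun x hx => sl (cq x (hGU hx) z)
    have sN : ∀ x ∈ K, ContinuousAt (fun x => N x z) x := fun x hx => sl (cN x hx z hz.1)
    set f : E3 → ℂ := fun x => G x / q x z with hf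
    set g : E3 → ℂ := fun x => (D x z)⁻¹ with hg
    have hts : tsupport f ⊆ K := by
      refine closure_minimal ?_ hK.isClosed
      intro x hx
      by_contra hxK
      exact hx (by simp [hf, hG0 x hxK])
    have hfd : ∀ x ∈ K, HasFDerivAt f (fderiv ℝ f x) x ∧ fderiv ℝ f x e = N x z := by
      intro x hx
      obtain ⟨L, hL, hLe⟩ := aff_hasFDerivAt ((hda x (hGU hx)).differentiableAt (by norm_num))
        ((hdb₁ x (hGU hx)).differentiableAt (by norm_num))
        ((hdb₂ x (hGU hx)).differentiableAt (by norm_num)) z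
      obtain ⟨M', h1, hMe⟩ := my_div (hG.differentiable (by norm_num) x).hasFDerivAt hL
        (hq x hx z hz.1)
      have h2 : HasFDerivAt f M' x := h1
      refine ⟨h2.differentiableAt.hasFDerivAt, ?_⟩
      rw [h2.fderiv, hMe, hLe]
      rfl
    have hgd : ∀ x ∈ K, DifferentiableAt ℝ g x ∧ fderiv ℝ g x e = - q x z / (D x z)^2 := by
      intro x hx
      obtain ⟨L, hL, hLe⟩ := aff_hasFDerivAt ((ha x (hGU hx)).differentiableAt (by norm_num))
        ((hb₁ x (hGU hx)).differentiableAt (by norm_num))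
        ((hb₂ x (hGU hx)).differentiableAt (by norm_num)) z
      obtain ⟨M', h1, hMe⟩ := my_inv hL (hne x hx z hz)
      have h2 : HasFDerivAt g M' x := h1
      refine ⟨h2.differentiableAt, ?_⟩
      rw [h2.fderiv, hMe, hLe]
    have e1 : ∀ x, f x * fderiv ℝ g x e = - (G x / (D x z)^2) := by
      intro x
      by_cases hx : x ∈ K
      · rw [(hgd x hx).2, hf]
        have := hq x hx z hz.1
        field_simp
      · simp [hf, hG0 x hx]
    have e2 : ∀ x, fderiv ℝ f x e * g x = N x z / D x z := by
      intro x
      by_cases hx : x ∈ K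
      · rw [(hfd x hx).2, hg, div_eq_mul_inv]
      · have : fderiv ℝ f x = 0 := by
          have h2 : tsupport (fderiv ℝ f) ⊆ tsupport f := tsupport_fderiv_subset ℝ
          exact image_eq_zero_of_notMem_tsupport fun h => hx (hts (h2 h))
        rw [this, hN0 x hx z]; simp
    have i1 : Integrable (fun x => fderiv ℝ f x e * g x) μ := by
      simp only [e2]
      obtain ⟨k1, k2⟩ := cont_of_compact (h := fun x => N x z / D x z) hK
        (fun x hx => by simp [hN0 x hx z]) (fun x hx => (sN x hx).div (sD x hx) (hne x hx z hz))
      exact k1.integrable_of_hasCompactSupport k2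
    have i2 : Integrable (fun x => f x * fderiv ℝ g x e) μ := by
      simp only [e1]
      obtain ⟨k1, k2⟩ := cont_of_compact (h := fun x => G x / (D x z)^2) hK
        (fun x hx => by simp [hG0 x hx]) (fun x hx => (hG.continuous.continuousAt).div
          ((sD x hx).pow 2) (pow_ne_zero 2 (hne x hx z hz)))
      exact (k1.integrable_of_hasCompactSupport k2).neg
    have i3 : Integrable (fun x => f x * g x) μ := by
      obtain ⟨k1, k2⟩ := cont_of_compact (h := fun x => f x * g x) hK
        (fun x hx => by simp [hf, hG0 x hx]) (fun x hx => 
          ((hG.continuous.continuousAt).div (sq x hx) (hq x hx z hz.1)).mul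
          ((sD x hx).inv₀ (hne x hx z hz)))
      exact k1.integrable_of_hasCompactSupport k2
    have hfdiff : Differentiable ℝ f := by
      intro x
      by_cases hx : x ∈ tsupport f
      · exact (hfd x (hts hx)).1.differentiableAt
      · have := notMem_tsupport_iff_eventuallyEq.1 hx
        exact (differentiableAt_const (0:ℂ)).congr_of_eventuallyEq this
    have key := integral_mul_fderiv_eq_neg_fderiv_mul_of_integrable (μ := μ) (f := f) (g := g)
      (v := e) i1 i2 i3 (fun x _ => hfdiff x) (fun x hx => (hgd x (hts hx)).1)
    simp only [e1, e2, integral_neg, neg_inj] at key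
    exact key
  -- dominated convergence
  clear_value N D
  refine ⟨∫ y, N (y + P z₀) z₀ / D (y + P z₀) z₀ ∂μ, ?_⟩
  have hz₀W : z₀ ∈ W := mem_of_mem_nhds hWn
  have hev : ∀ᶠ z in 𝓝[Ds] z₀, z ∈ W ∩ Ds :=
    Filter.inter_mem (mem_nhdsWithin_of_mem_nhds hWn) self_mem_nhdsWithin
  have hT : Tendsto (fun z => ∫ y, N (y + P z) z / D (y + P z) z ∂μ) (𝓝[Ds] z₀)
      (𝓝 (∫ y, N (y + P z₀) z₀ / D (y + P z₀) z₀ ∂μ)) := by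
    refine tendsto_integral_filter_of_dominated_convergence
      (fun y => (M / c) * ∏ i, gsing R (y i)) ?_ ?_ ((gprod_integrable μ R).const_mul _) ?_
    · filter_upwards [hev] with z hz
      have sl : ∀ {h : E3 × C2 → ℂ} {x : E3}, ContinuousAt h (x, z) →
        ContinuousAt (fun y => h (y, z)) x := fun {h x} hh =>
        ContinuousAt.comp (f := fun y : E3 => (y, z)) (g := h) hh (by fun_prop)
      obtain ⟨k1, k2⟩ := cont_of_compact (h := fun x => N x z / D x z) hK
        (fun x hx => by simp [hN0 x hx z]) (fun x hx => ContinuousAt.div (sl (cN x hx z hz.1))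
          (sl (cD x (hGU hx) z)) (hne x hx z hz))
      exact (k1.comp (continuous_id.add continuous_const)).aestronglyMeasurable
    · filter_upwards [hev] with z hz
      filter_upwards [ae_coord_ne μ] with y hy
      by_cases hx : y + P z ∈ K
      · have h1 := hlow _ hx z hz
        have h2 := hM _ hx z hz.1
        have h3 := hR _ hx z hz.1
        have hy' : ∀ i, (y + P z) i - P z i = y i := fun i => by simp
        simp only [hy'] at h1 h3
        have hg : ∏ i, gsing R (y i) = (∏ i, |y i| ^ (4/5 : ℝ))⁻¹ := by
          rw [← Finset.prod_inv_distrib]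
          refine Finset.prod_congr rfl fun i _ => ?_
          rw [gsing, indicator_of_mem (show y i ∈ Icc (-R) R from abs_le.1 (h3 i)), Real.rpow_neg (abs_nonneg _)]
        have hpos : 0 < ∏ i, |y i| ^ (4/5 : ℝ) :=
          Finset.prod_pos fun i _ => Real.rpow_pos_of_pos (abs_pos.2 (hy i)) _
        rw [hg, norm_div, ← div_eq_mul_inv, div_div]
        exact div_le_div₀ hM0 h2 (by positivity) h1
      · rw [hN0 _ hx, zero_div, norm_zero]
        refine mul_nonneg (by positivity) (Finset.prod_nonneg fun i _ => ?_)
        exact indicator_nonneg (fun s _ => by positivity) _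
    · filter_upwards [ae_coord_ne μ] with y hy
      have hPt : Tendsto (fun z => (y + P z, z)) (𝓝[Ds] z₀) (𝓝 (y + P z₀, z₀)) := by
        have : Continuous (fun z => (y + P z, z)) := by fun_prop
        exact (this.tendsto z₀).mono_left nhdsWithin_le_nhds
      by_cases hx : y + P z₀ ∈ K
      · have hne' : y + P z₀ ≠ P z₀ := by
          intro h
          have : y = 0 := by simpa using h
          exact hy 0 (by simp [this])
        have t1 : Tendsto (fun z => N (y + P z) z) (𝓝[Ds] z₀) (𝓝 (N (y + P z₀) z₀)) :=
          Tendsto.comp (g := fun p : E3 × C2 => N p.1 p.2) (cN (y + P z₀) hx z₀ hz₀W).tendsto hPt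
        have t2 : Tendsto (fun z => D (y + P z) z) (𝓝[Ds] z₀) (𝓝 (D (y + P z₀) z₀)) :=
          Tendsto.comp (g := fun p : E3 × C2 => D p.1 p.2) (cD (y + P z₀) (hGU hx) z₀).tendsto hPt
        exact t1.div t2 (hne₀ _ hx hne')
      · rw [hN0 _ hx, zero_div]
        have : ∀ᶠ z in 𝓝[Ds] z₀, y + P z ∈ Kᶜ := by
          have h1 : Tendsto (fun z => y + P z) (𝓝[Ds] z₀) (𝓝 (y + P z₀)) := by
            have : Continuous (fun z => y + P z) := by fun_prop
            exact (this.tendsto z₀).mono_left nhdsWithin_le_nhds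
          exact h1 (hK.isClosed.isOpen_compl.mem_nhds hx)
        refine tendsto_const_nhds.congr' ?_
        filter_upwards [this] with z hz
        rw [hN0 _ hz, zero_div]
  refine hT.congr' ?_
  filter_upwards [hev] with z hz
  rw [hibp z hz]
  exact integral_add_right_eq_self (μ := μ) (fun x => N x z / D x z) (P z)

end IBP

section Charts
open Module Set Filter Topology
open scoped NNReal

def cc (z : C2) : Fin 4 → ℝ := ![(z 0).re, (z 0).im, (z 1).re, (z 1).im]
def ex : Fin 4 → ℕ := ![2, 4, 2, 2]
def EE : Fin 4 → C2 := ![!₂[1, 0], !₂[I, 0], !₂[0, 1], !₂[0, I]]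

theorem cc_add (z w : C2) (k : Fin 4) : cc (z + w) k = cc z k + cc w k := by
  fin_cases k <;> simp [cc]
theorem cc_smul (r : ℝ) (z : C2) (k : Fin 4) : cc (r • z) k = r * cc z k := by
  fin_cases k <;> simp [cc]
theorem cc_sub (z w : C2) (k : Fin 4) : cc (z - w) k = cc z k - cc w k := by
  fin_cases k <;> simp [cc]
theorem cc_zero (k : Fin 4) : cc 0 k = 0 := by
  fin_cases k <;> simp [cc]
theorem cc_EE (k l : Fin 4) : cc (EE k) l = if k = l then 1 else 0 := by
  fin_cases k <;> fin_cases l <;> simp [cc, EE]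
theorem cc_ext {z w : C2} (h : ∀ k, cc z k = cc w k) : z = w := by
  have h0 := h 0
  have h1 := h 1
  have h2 := h 2
  have h3 := h 3
  simp [cc] at h0 h1 h2 h3
  ext i
  fin_cases i
  · exact Complex.ext h0 h1
  · exact Complex.ext h2 h3

theorem rho_eq (z : C2) : rho z = ∑ k, cc z k ^ ex k - 1 := by
  simp [rho, cc, ex, Fin.sum_univ_four, Complex.sq_norm, Complex.normSq_apply]
  ring

theorem rho_cont : Continuous rho := by
  unfold rho
  fun_prop

theorem norm_sq_C2 (z : C2) : ‖z‖ ^ 2 = ∑ k, cc z k ^ 2 := by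
  rw [EuclideanSpace.norm_sq_eq]
  simp [cc, Fin.sum_univ_four, Complex.sq_norm, Complex.normSq_apply]
  ring

theorem cc_cont (k : Fin 4) : Continuous (fun z => cc z k) := by
  fin_cases k <;> simp only [cc] <;> simp <;> fun_prop

theorem bD_closed : IsClosed bD := isClosed_eq rho_cont continuous_const

theorem bD_coord {z : C2} (hz : rho z ≤ 0) (k : Fin 4) : |cc z k| ≤ 1 := by
  rw [rho_eq] at hz
  have h : ∀ k, 0 ≤ cc z k ^ ex k := by
    intro k
    fin_cases k <;> simp [ex] <;> positivity
  have h1 : cc z k ^ ex k ≤ 1 := by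
    have := Finset.single_le_sum (f := fun k => cc z k ^ ex k) (fun k _ => h k) (Finset.mem_univ k)
    linarith
  by_contra hc
  push Not at hc
  have h2 : 1 < |cc z k| ^ ex k := one_lt_pow₀ hc (by fin_cases k <;> simp [ex])
  rw [Even.pow_abs (by fin_cases k <;> simp [ex] <;> decide)] at h2
  linarith

theorem bD_bounded {z : C2} (hz : rho z ≤ 0) : ‖z‖ ≤ 2 := by
  have h : ‖z‖ ^ 2 ≤ 4 := by
    rw [norm_sq_C2]
    have : ∀ k ∈ Finset.univ, cc z k ^ 2 ≤ 1 := fun k _ => by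
      rw [← sq_abs]; have := bD_coord hz k; have := abs_nonneg (cc z k); nlinarith
    have := Finset.sum_le_card_nsmul _ _ _ this
    simpa using this
  nlinarith [norm_nonneg z]

theorem bD_compact : IsCompact bD := by
  refine Metric.isCompact_of_isClosed_isBounded bD_closed ?_
  refine (Metric.isBounded_closedBall (x := (0:C2)) (r := 2)).subset ?_
  intro z hz
  simp
  exact bD_bounded (le_of_eq hz)

def bt1 (w : C2) : ℂ := ((w 0).re : ℂ) - 2 * I * ((w 0).im : ℂ) ^ 3
def bt2 (w : C2) : ℂ := (starRingEnd ℂ) (w 1)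

theorem Delta_eq (w z : C2) : Delta w z = bt1 w * (w 0 - z 0) + bt2 w * (w 1 - z 1) := rfl

theorem Delta_re (w z : C2) : (Delta w z).re = cc w 0 * (cc w 0 - cc z 0)
    + 2 * cc w 1 ^ 3 * (cc w 1 - cc z 1) + cc w 2 * (cc w 2 - cc z 2)
    + cc w 3 * (cc w 3 - cc z 3) := by
  simp [Delta, cc, pow_succ]
  ring

theorem Delta_im (w z : C2) : (Delta w z).im = cc w 0 * (cc w 1 - cc z 1)
    - 2 * cc w 1 ^ 3 * (cc w 0 - cc z 0) + cc w 2 * (cc w 3 - cc z 3)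
    - cc w 3 * (cc w 2 - cc z 2) := by
  simp [Delta, cc, pow_succ]
  ring

theorem Delta_lower (w z : C2) : rho w - rho z + ∑ k, (cc w k - cc z k) ^ ex k / 3
    ≤ 2 * (Delta w z).re := by
  rw [Delta_re, rho_eq, rho_eq]
  simp only [Fin.sum_univ_four, ex]
  simp
  nlinarith [sq_nonneg (cc w 0 - cc z 0), sq_nonneg (cc w 2 - cc z 2), sq_nonneg (cc w 3 - cc z 3),
    mul_nonneg (sq_nonneg (cc w 1 - cc z 1)) (sq_nonneg (2 * cc w 1 + cc z 1))]

theorem Delta_ne {w z : C2} (hw : rho w = 0) (hz : rho z ≤ 0) (h : rho z < 0 ∨ w ≠ z) :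
    0 < (Delta w z).re := by
  have h1 := Delta_lower w z
  have h2 : ∀ k, 0 ≤ (cc w k - cc z k) ^ ex k := by
    intro k
    fin_cases k <;> simp [ex] <;> positivity
  rcases h with h | h
  · have : 0 ≤ ∑ k, (cc w k - cc z k) ^ ex k / 3 := Finset.sum_nonneg fun k _ => by
      have := h2 k; positivity
    linarith
  · obtain ⟨k, hk⟩ : ∃ k, cc w k ≠ cc z k := by
      by_contra hc
      push Not at hc
      exact h (cc_ext hc)
    have : 0 < ∑ k, (cc w k - cc z k) ^ ex k / 3 := by
      refine Finset.sum_pos' (fun k _ => by have := h2 k; positivity) ⟨k, Finset.mem_univ _, ?_⟩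
      have : 0 < (cc w k - cc z k) ^ ex k := by
        refine lt_of_le_of_ne (h2 k) (Ne.symm (pow_ne_zero _ (sub_ne_zero.2 hk)))
      positivity
    linarith

def prj (k : Fin 4) : C2 →L[ℝ] E3 := LinearMap.toContinuousLinearMap
  { toFun := fun z => WithLp.toLp 2 (fun i => cc z (k.succAbove i))
    map_add' := fun z w => by ext i; simp [cc_add]
    map_smul' := fun r z => by ext i; simp [cc_smul] }

theorem prj_apply (k : Fin 4) (z : C2) (i : Fin 3) : prj k z i = cc z (k.succAbove i) := rfl

def iota (k : Fin 4) : E3 →L[ℝ] C2 :=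
  ∑ i : Fin 3, (EuclideanSpace.proj i : E3 →L[ℝ] ℝ).smulRight (EE (k.succAbove i))

theorem iota_apply (k : Fin 4) (x : E3) : iota k x = ∑ i, x i • EE (k.succAbove i) := by
  simp [iota]

theorem cc_sum (f : Fin 3 → C2) (k : Fin 4) : cc (∑ i, f i) k = ∑ i, cc (f i) k := by
  simp [Fin.sum_univ_three, cc_add]

theorem cc_iota_self (k : Fin 4) (x : E3) : cc (iota k x) k = 0 := by
  rw [iota_apply, cc_sum]
  simp [cc_smul, cc_EE]

theorem cc_iota_succ (k : Fin 4) (x : E3) (i : Fin 3) : cc (iota k x) (k.succAbove i) = x i := by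
  rw [iota_apply, cc_sum]
  simp [cc_smul, cc_EE]

def sx (k : Fin 4) (x : E3) : ℝ := ∑ i, x i ^ ex (k.succAbove i)
def gg (k : Fin 4) (s : ℝ) (x : E3) : ℝ := s * (1 - sx k x) ^ ((ex k : ℝ)⁻¹)
def Ph (k : Fin 4) (s : ℝ) (x : E3) : C2 := iota k x + gg k s x • EE k
def UU (k : Fin 4) : Set E3 := {x | sx k x < 1}

theorem sx_contDiff (k : Fin 4) : ContDiff ℝ 3 (sx k) := by
  unfold sx; fun_prop

theorem UU_open (k : Fin 4) : IsOpen (UU k) := isOpen_lt (sx_contDiff k).continuous continuous_const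

theorem gg_contDiffAt (k : Fin 4) (s : ℝ) {x : E3} (hx : x ∈ UU k) : ContDiffAt ℝ 3 (gg k s) x := by
  unfold gg
  refine contDiffAt_const.mul (ContDiffAt.rpow_const_of_ne ?_ ?_)
  · exact contDiffAt_const.sub (sx_contDiff k).contDiffAt
  · have : sx k x < 1 := hx
    linarith

theorem Ph_contDiffAt (k : Fin 4) (s : ℝ) {x : E3} (hx : x ∈ UU k) : ContDiffAt ℝ 3 (Ph k s) x := by
  unfold Ph
  exact (iota k).contDiff.contDiffAt.add ((gg_contDiffAt k s hx).smul contDiffAt_const)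

theorem cc_Ph_self (k : Fin 4) (s : ℝ) (x : E3) : cc (Ph k s x) k = gg k s x := by
  simp [Ph, cc_add, cc_smul, cc_iota_self, cc_EE]

theorem cc_Ph_succ (k : Fin 4) (s : ℝ) (x : E3) (i : Fin 3) :
    cc (Ph k s x) (k.succAbove i) = x i := by
  simp [Ph, cc_add, cc_smul, cc_iota_succ, cc_EE]

theorem prj_Ph (k : Fin 4) (s : ℝ) (x : E3) : prj k (Ph k s x) = x := by
  ext i
  rw [prj_apply, cc_Ph_succ]

theorem rho_split (k : Fin 4) (w : C2) : rho w = cc w k ^ ex k + sx k (prj k w) - 1 := by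
  rw [rho_eq, Fin.sum_univ_succAbove _ k]
  rfl

theorem ex_even (k : Fin 4) : Even (ex k) := by fin_cases k <;> simp [ex] <;> decide
theorem ex_ne (k : Fin 4) : ex k ≠ 0 := by fin_cases k <;> simp [ex]

theorem Ph_mem (k : Fin 4) {s : ℝ} (hs : |s| = 1) {x : E3} (hx : x ∈ UU k) :
    Ph k s x ∈ bD ∧ 0 < s * cc (Ph k s x) k := by
  have hx' : 0 < 1 - sx k x := by have : sx k x < 1 := hx; linarith
  have hss : s * s = 1 := by rw [← abs_mul_abs_self, hs]; norm_num
  constructor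
  · change rho _ = 0
    rw [rho_split k, cc_Ph_self, prj_Ph, gg, mul_pow, ← Even.pow_abs (ex_even k) s, hs, one_pow,
      one_mul, Real.rpow_inv_natCast_pow hx'.le (ex_ne k)]
    ring
  · rw [cc_Ph_self, gg, ← mul_assoc, hss, one_mul]
    positivity

theorem Ph_prj (k : Fin 4) {s : ℝ} (hs : |s| = 1) {w : C2} (hw : w ∈ bD) (h : 0 < s * cc w k) :
    prj k w ∈ UU k ∧ Ph k s (prj k w) = w := by
  have hw' : rho w = 0 := hw
  rw [rho_split k] at hw'
  have hss : s * s = 1 := by rw [← abs_mul_abs_self, hs]; norm_num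
  have hc : cc w k ≠ 0 := by rintro h0; simp [h0] at h
  have hpos : 0 < cc w k ^ ex k := (ex_even k).pow_pos hc
  refine ⟨by change sx _ _ < 1; linarith, cc_ext fun l => ?_⟩
  rcases Fin.eq_self_or_eq_succAbove k l with rfl | ⟨i, rfl⟩
  · rw [cc_Ph_self, gg, show 1 - sx l (prj l w) = cc w l ^ ex l by linarith]
    have : cc w l ^ ex l = (s * cc w l) ^ ex l := by
      rw [mul_pow, ← Even.pow_abs (ex_even l) s, hs, one_pow, one_mul]
    rw [this, Real.pow_rpow_inv_natCast h.le (ex_ne l), ← mul_assoc, hss, one_mul]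
  · rw [cc_Ph_succ, prj_apply]

theorem Ph_image (k : Fin 4) {s : ℝ} (hs : |s| = 1) :
    Ph k s '' UU k = {w | w ∈ bD ∧ 0 < s * cc w k} := by
  ext w
  constructor
  · rintro ⟨x, hx, rfl⟩
    exact Ph_mem k hs hx
  · rintro ⟨h1, h2⟩
    exact ⟨_, Ph_prj k hs h1 h2⟩

theorem Ph_inj (k : Fin 4) (s : ℝ) : InjOn (Ph k s) (UU k) := fun x _ y _ h => by
  rw [← prj_Ph k s x, h, prj_Ph]

theorem Ph_fderiv (k : Fin 4) (s : ℝ) {x : E3} (hx : x ∈ UU k) (e : E3) :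
    fderiv ℝ (Ph k s) x e = iota k e + (fderiv ℝ (gg k s) x e) • EE k := by
  have h1 := ((gg_contDiffAt k s hx).differentiableAt (by norm_num)).hasFDerivAt.smul_const (EE k)
  have h2 : HasFDerivAt (Ph k s) _ x := (iota k).hasFDerivAt.add h1
  rw [h2.fderiv]
  simp

theorem Ph_fderiv_inj (k : Fin 4) (s : ℝ) {x : E3} (hx : x ∈ UU k) :
    Function.Injective (fderiv ℝ (Ph k s) x) := by
  rw [injective_iff_map_eq_zero]
  intro e he
  rw [Ph_fderiv k s hx] at he
  ext i
  have : cc (iota k e + (fderiv ℝ (gg k s) x e) • EE k) (k.succAbove i) = 0 := by rw [he, cc_zero]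
  simpa [cc_add, cc_smul, cc_iota_succ, cc_EE] using this

def JJ (k : Fin 4) (s : ℝ) (x : E3) : ℝ := (fderiv ℝ (Ph k s) x : E3 →ₗ[ℝ] C2).normDet

theorem JJ_contDiffAt (k : Fin 4) (s : ℝ) {x : E3} (hx : x ∈ UU k) : ContDiffAt ℝ 1 (JJ k s) x := by
  set b := EuclideanSpace.basisFun (Fin 3) ℝ
  have h : JJ k s = fun x => Real.sqrt
      (Matrix.gram ℝ (fun i => fderiv ℝ (Ph k s) x (b i))).det := by
    funext x
    have := LinearMap.normDet_sq_eq_det_gram (fderiv ℝ (Ph k s) x : E3 →ₗ[ℝ] C2) b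
    simp only [RCLike.ofReal_real_eq_id, id_eq] at this
    rw [JJ, ← Real.sqrt_sq (LinearMap.normDet_nonneg _)]
    exact congrArg _ this
  have hd : ∀ i, ContDiffAt ℝ 1 (fun x => fderiv ℝ (Ph k s) x (b i)) x := fun i =>
    ((Ph_contDiffAt k s hx).fderiv_right (m := 1) (by norm_num)).clm_apply contDiffAt_const
  have hne : JJ k s x ≠ 0 := by
    rw [JJ, Ne, LinearMap.normDet_eq_zero_iff_ker_ne_bot, not_not, LinearMap.ker_eq_bot]
    exact Ph_fderiv_inj k s hx
  rw [h] at hne ⊢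
  refine ContDiffAt.sqrt ?_ fun h0 => hne (by simp only [h0, Real.sqrt_zero])
  simp only [Matrix.det_fin_three, Matrix.gram_apply]
  have hij : ∀ i j, ContDiffAt ℝ 1 (fun x => inner ℝ (fderiv ℝ (Ph k s) x (b i))
    (fderiv ℝ (Ph k s) x (b j))) x := fun i j => (hd i).inner ℝ (hd j)
  have := hij 0 0
  fun_prop (disch := assumption)

end Charts

section Meas
open Module Set Filter Topology
open scoped NNReal

instance haar3 : (μH[3] : Measure E3).IsAddHaarMeasure := by
  have h := isAddHaarMeasure_hausdorffMeasure (E := E3)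
  have h3 : ((finrank ℝ E3 : ℕ) : ℝ) = 3 := by simp
  rw [h3] at h
  exact h

theorem chart_measure (k : Fin 4) {s : ℝ} (hs : |s| = 1) :
    (μH[3] : Measure C2).restrict {w | w ∈ bD ∧ 0 < s * cc w k} =
    (((μH[3] : Measure E3).restrict (UU k)).withDensity
      (fun x => ENNReal.ofReal (JJ k s x))).map (Ph k s) := by
  have h3 : ((finrank ℝ E3 : ℕ) : ℝ) = 3 := by simp
  have h := area_formula (Φ := Ph k s) (UU_open k) (L := fun x => fderiv ℝ (Ph k s) x)
    (fun x hx => (Ph_contDiffAt k s hx).hasStrictFDerivAt (by norm_num))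
    (fun x hx => Ph_fderiv_inj k s hx) (Ph_inj k s)
    (fun x hx => (JJ_contDiffAt k s hx).continuousAt.continuousWithinAt)
  rw [h3, Ph_image k hs, restrict_withDensity (UU_open k).measurableSet] at h
  exact h

theorem JJ_cont (k : Fin 4) (s : ℝ) : ContinuousOn (JJ k s) (UU k) :=
  fun x hx => (JJ_contDiffAt k s hx).continuousAt.continuousWithinAt
theorem Ph_cont (k : Fin 4) (s : ℝ) : ContinuousOn (Ph k s) (UU k) :=
  fun x hx => (Ph_contDiffAt k s hx).continuousAt.continuousWithinAt

theorem chart_integral (k : Fin 4) {s : ℝ} (hs : |s| = 1) {h : C2 → ℂ}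
    (hm : AEStronglyMeasurable h ((μH[3] : Measure C2).restrict {w | w ∈ bD ∧ 0 < s * cc w k})) :
    ∫ w in {w | w ∈ bD ∧ 0 < s * cc w k}, h w ∂μH[3] =
      ∫ x in UU k, (JJ k s x : ℂ) * h (Ph k s x) ∂μH[3] := by
  rw [chart_measure k hs] at hm ⊢
  have hJ : AEMeasurable (fun x => ENNReal.ofReal (JJ k s x)) ((μH[3] : Measure E3).restrict (UU k)) :=
    ((JJ_cont k s).aemeasurable (UU_open k).measurableSet).ennreal_ofReal
  rw [integral_map _ hm]
  · rw [integral_withDensity_eq_integral_toReal_smul₀ hJ (by simp)]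
    refine integral_congr_ae (Eventually.of_forall fun x => ?_)
    simp only
    rw [ENNReal.toReal_ofReal (show 0 ≤ JJ k s x from LinearMap.normDet_nonneg _)]
    simp
  · exact ((Ph_cont k s).aemeasurable (UU_open k).measurableSet).mono_ac
      (withDensity_absolutelyContinuous _ _)

theorem exists_chart {z : C2} (hz : z ∈ bD) : ∃ k s, |s| = 1 ∧ 0 < s * cc z k := by
  have hz' : rho z = 0 := hz
  rw [rho_eq] at hz'
  obtain ⟨k, hk⟩ : ∃ k, cc z k ≠ 0 := by
    by_contra hc
    push Not at hc
    simp [hc, ex_ne] at hz'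
  rcases lt_or_gt_of_ne hk with h | h
  · exact ⟨k, -1, by simp, by linarith⟩
  · exact ⟨k, 1, by simp, by linarith⟩

theorem bD_finite : (μH[3] : Measure C2) bD < ⊤ := by
  refine bD_compact.measure_lt_top_of_nhdsWithin ?_
  intro z hz
  obtain ⟨k, s, hs, hk⟩ := exists_chart hz
  obtain ⟨hu, hp⟩ := Ph_prj k hs hz hk
  obtain ⟨K, t, ht, hl⟩ := ((Ph_contDiffAt k s hu).of_le (m := 1) (by norm_num)).exists_lipschitzOnWith
  set t' := t ∩ Metric.ball (prj k z) 1
  refine ⟨Ph k s '' t', ?_, ?_⟩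
  · have h1 : prj k ⁻¹' t' ∈ 𝓝 z := (prj k).continuous.continuousAt.preimage_mem_nhds
      (inter_mem ht (Metric.ball_mem_nhds _ one_pos))
    have h2 : {w | 0 < s * cc w k} ∈ 𝓝 z :=
      (isOpen_lt continuous_const (continuous_const.mul (cc_cont k))).mem_nhds hk
    filter_upwards [mem_nhdsWithin_of_mem_nhds h1, mem_nhdsWithin_of_mem_nhds h2,
      self_mem_nhdsWithin] with w a b c
    exact ⟨_, a, (Ph_prj k hs c b).2⟩
  · refine ((hl.mono inter_subset_left).hausdorffMeasure_image_le (d := 3) (by norm_num)).trans_lt ?_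
    refine ENNReal.mul_lt_top (by simp) ?_
    exact (measure_mono inter_subset_right).trans_lt measure_ball_lt_top

instance bD_fin : IsFiniteMeasure ((μH[3] : Measure C2).restrict bD) :=
  ⟨by rw [Measure.restrict_apply_univ]; exact bD_finite⟩

end Meas

section Loc
open Module Set Filter Topology
open scoped NNReal

theorem prod_low {A B C : ℝ} (hA : |A| ≤ 2) (hB : |B| ≤ 2) (hC : |C| ≤ 2) :
    |A| ^ (4/5 : ℝ) * |B| ^ (4/5 : ℝ) * |C| ^ (4/5 : ℝ) ≤ A ^ 2 + B ^ 2 + C ^ 4 := by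
  set S := A ^ 2 + B ^ 2 + C ^ 4 with hS
  have hS0 : 0 ≤ S := by positivity
  have key : ∀ {x : ℝ}, x ^ 2 ≤ S → |x| ^ (4/5 : ℝ) ≤ S ^ (2/5 : ℝ) := by
    intro x hx
    have : |x| ^ (4/5 : ℝ) = (x ^ 2) ^ (2/5 : ℝ) := by
      rw [← sq_abs, ← Real.rpow_natCast, ← Real.rpow_mul (abs_nonneg _)]
      norm_num
    rw [this]
    exact Real.rpow_le_rpow (sq_nonneg _) hx (by norm_num)
  have key4 : |C| ^ (4/5 : ℝ) ≤ S ^ (1/5 : ℝ) := by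
    have : |C| ^ (4/5 : ℝ) = (C ^ 4) ^ (1/5 : ℝ) := by
      rw [← Even.pow_abs (by decide) C, ← Real.rpow_natCast, ← Real.rpow_mul (abs_nonneg _)]
      norm_num
    rw [this]
    exact Real.rpow_le_rpow (by positivity) (by rw [hS]; nlinarith [sq_nonneg A, sq_nonneg B]) (by norm_num)
  have h4 : 0 ≤ C ^ 4 := by positivity
  calc _ ≤ S ^ (2/5 : ℝ) * S ^ (2/5 : ℝ) * S ^ (1/5 : ℝ) := by
        gcongr
        · exact key (by rw [hS]; nlinarith [sq_nonneg A, sq_nonneg B])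
        · exact key (by rw [hS]; nlinarith [sq_nonneg A, sq_nonneg B])
    _ = S := by
        rw [← Real.rpow_add' hS0 (by norm_num), ← Real.rpow_add' hS0 (by norm_num)]
        norm_num

theorem prod_low_k (k : Fin 4) {y : Fin 3 → ℝ} (hy : ∀ i, |y i| ≤ 2) :
    (1/4) * ∏ i, |y i| ^ (4/5 : ℝ) ≤ ∑ i, y i ^ ex (k.succAbove i) := by
  have a1 : y 0 ^ 4 ≤ 4 * y 0 ^ 2 := by
    have := hy 0
    have h2 : y 0 ^ 2 ≤ 4 := by rw [← sq_abs]; nlinarith [abs_nonneg (y 0)]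
    nlinarith [sq_nonneg (y 0)]
  have p1 := prod_low (hy 1) (hy 2) (hy 0)
  have p2 := prod_low (hy 0) (hy 2) (hy 1)
  have h0 := sq_nonneg (y 0)
  have h1 := sq_nonneg (y 1)
  have h2 := sq_nonneg (y 2)
  have h3 : 0 ≤ y 1 ^ 4 := by positivity
  have h4 : 0 ≤ y 0 ^ 4 := by positivity
  rw [Fin.prod_univ_three, Fin.sum_univ_three]
  fin_cases k <;> simp [ex, Fin.succAbove] <;> nlinarith

theorem bt1_contDiff : ContDiff ℝ 3 bt1 := by
  unfold bt1
  have h0 : ContDiff ℝ 3 (fun w : C2 => w 0) := by fun_prop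
  have h1 : ContDiff ℝ 3 (fun w : C2 => ((w 0).re : ℂ)) :=
    (ofRealCLM.contDiff.comp reCLM.contDiff).comp h0
  have h2 : ContDiff ℝ 3 (fun w : C2 => ((w 0).im : ℂ)) :=
    (ofRealCLM.contDiff.comp imCLM.contDiff).comp h0
  exact h1.sub (contDiff_const.mul (h2.pow 3))

theorem bt2_contDiff : ContDiff ℝ 3 bt2 := by
  unfold bt2
  have h0 : ContDiff ℝ 3 (fun w : C2 => w 1) := by fun_prop
  exact conjCLE.contDiff.comp h0

theorem Delta_cont : Continuous (fun p : C2 × C2 => Delta p.1 p.2) := by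
  simp only [Delta_eq]
  have h1 := bt1_contDiff.continuous
  have h2 := bt2_contDiff.continuous
  fun_prop

def jj : Fin 4 → Fin 3 := ![0, 0, 2, 2]

theorem q_ne (k : Fin 4) (z : C2) (hz : cc z k ≠ 0) (t : ℝ) :
    bt1 z * (EE (k.succAbove (jj k)) + t • EE k) 0
      + bt2 z * (EE (k.succAbove (jj k)) + t • EE k) 1 ≠ 0 := by
  have hI : ∀ t : ℝ, (I + t : ℂ) ≠ 0 := fun t h => by simpa using congrArg Complex.im h
  have hI' : ∀ t : ℝ, (1 + t * I : ℂ) ≠ 0 := fun t h => by simpa using congrArg Complex.re h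
  fin_cases k
  · simp [EE, jj, Fin.succAbove]
    refine ⟨fun h => hz ?_, hI t⟩
    simpa [cc, bt1, pow_succ] using congrArg Complex.re h
  · simp [EE, jj, Fin.succAbove]
    refine ⟨fun h => hz ?_, hI' t⟩
    simpa [cc, bt1, pow_succ] using congrArg Complex.im h
  · simp [EE, jj, Fin.succAbove]
    refine ⟨fun h => hz ?_, hI t⟩
    simpa [cc, bt2] using congrArg Complex.re h
  · simp [EE, jj, Fin.succAbove]
    refine ⟨fun h => hz ?_, hI' t⟩
    simpa [cc, bt2] using congrArg Complex.im h

def aa (k : Fin 4) (s : ℝ) (x : E3) : ℂ :=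
  bt1 (Ph k s x) * (Ph k s x) 0 + bt2 (Ph k s x) * (Ph k s x) 1

theorem aff_Delta (k : Fin 4) (s : ℝ) (x : E3) (z : C2) :
    aff (aa k s) (fun x => bt1 (Ph k s x)) (fun x => bt2 (Ph k s x)) x z = Delta (Ph k s x) z := by
  rw [Delta_eq, aff, aa]
  ring

theorem b1_cd (k : Fin 4) (s : ℝ) {x : E3} (hx : x ∈ UU k) :
    ContDiffAt ℝ 2 (fun x => bt1 (Ph k s x)) x :=
  (bt1_contDiff.contDiffAt.comp x (Ph_contDiffAt k s hx)).of_le (by norm_num)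
theorem b2_cd (k : Fin 4) (s : ℝ) {x : E3} (hx : x ∈ UU k) :
    ContDiffAt ℝ 2 (fun x => bt2 (Ph k s x)) x :=
  (bt2_contDiff.contDiffAt.comp x (Ph_contDiffAt k s hx)).of_le (by norm_num)
theorem Phi_cd (k : Fin 4) (s : ℝ) {x : E3} (hx : x ∈ UU k) (i : Fin 2) :
    ContDiffAt ℝ 2 (fun x => Ph k s x i) x := by
  have h0 : ContDiff ℝ 3 (fun w : C2 => w i) := by fun_prop
  exact (h0.contDiffAt.comp x (Ph_contDiffAt k s hx)).of_le (by norm_num)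
theorem aa_cd (k : Fin 4) (s : ℝ) {x : E3} (hx : x ∈ UU k) : ContDiffAt ℝ 2 (aa k s) x :=
  ((b1_cd k s hx).mul (Phi_cd k s hx 0)).add ((b2_cd k s hx).mul (Phi_cd k s hx 1))

theorem dd_Phi (k : Fin 4) (s : ℝ) {x : E3} (hx : x ∈ UU k) (e : E3) (i : Fin 2) :
    dd e (fun x => Ph k s x i) x = (fderiv ℝ (Ph k s) x e) i := by
  have h := ((Ph_contDiffAt k s hx).differentiableAt (by norm_num)).hasFDerivAt
  have h2 := ((EuclideanSpace.proj i : C2 →L[ℂ] ℂ).restrictScalars ℝ).hasFDerivAt.comp x h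
  have h3 : HasFDerivAt (fun x => Ph k s x i) _ x := h2
  rw [dd, h3.fderiv]
  rfl

theorem q_ne' (k : Fin 4) {s : ℝ} (hs : |s| = 1) {z : C2} (hz : z ∈ bD) (hk : 0 < s * cc z k) :
    aff (dd (EuclideanSpace.single (jj k) 1) (aa k s))
      (dd (EuclideanSpace.single (jj k) 1) (fun x => bt1 (Ph k s x)))
      (dd (EuclideanSpace.single (jj k) 1) (fun x => bt2 (Ph k s x))) (prj k z) z ≠ 0 := by
  obtain ⟨hx, hP⟩ := Ph_prj k hs hz hk
  set e : E3 := EuclideanSpace.single (jj k) 1 with he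
  set x := prj k z with hxdef
  have d1 := ((b1_cd k s hx).differentiableAt (by norm_num)).hasFDerivAt
  have d2 := ((b2_cd k s hx).differentiableAt (by norm_num)).hasFDerivAt
  have f0 := ((Phi_cd k s hx 0).differentiableAt (by norm_num)).hasFDerivAt
  have f1 := ((Phi_cd k s hx 1).differentiableAt (by norm_num)).hasFDerivAt
  have hA : dd e (aa k s) x = bt1 z * (fderiv ℝ (Ph k s) x e) 0
      + dd e (fun x => bt1 (Ph k s x)) x * z 0 + (bt2 z * (fderiv ℝ (Ph k s) x e) 1
      + dd e (fun x => bt2 (Ph k s x)) x * z 1) := by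
    have h : HasFDerivAt (aa k s) _ x := (d1.mul f0).add (d2.mul f1)
    rw [← dd_Phi k s hx e 0, ← dd_Phi k s hx e 1]
    conv_lhs => rw [dd, h.fderiv]
    simp only [dd, hP]
    simp
    ring
  have hi : iota k e = EE (k.succAbove (jj k)) := by
    rw [iota_apply]
    rw [Finset.sum_eq_single (jj k)]
    · simp [he]
    · intro b _ hb
      simp [he, hb]
    · simp
  rw [aff, hA, Ph_fderiv k s hx, hi]
  have := q_ne k z (by rintro h; simp [h] at hk) (fderiv ℝ (gg k s) x e)
  intro h
  apply this
  rw [← h]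
  ring

def Din : Set C2 := {z | rho z < 0}

theorem local_limit {z₀ : C2} (hz₀ : z₀ ∈ bD) : ∃ r > 0, ∀ h : C2 → ℂ, ContDiff ℝ 1 h →
    tsupport h ⊆ Metric.closedBall z₀ r →
    ∃ l, Tendsto (fun z => ∫ w in bD, h w / (Delta w z) ^ 2 ∂μH[3]) (𝓝[Din] z₀) (𝓝 l) := by
  obtain ⟨k, s, hs, hk⟩ := exists_chart hz₀
  obtain ⟨hx₀, hP₀⟩ := Ph_prj k hs hz₀ hk
  have hq₀ := q_ne' k hs hz₀ hk
  set e : E3 := EuclideanSpace.single (jj k) 1 with he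
  set b₁ : E3 → ℂ := fun x => bt1 (Ph k s x) with hb₁
  set b₂ : E3 → ℂ := fun x => bt2 (Ph k s x) with hb₂
  have cq := aff_contAt
    ((dd_contDiffAt (n := 1) (aa_cd k s hx₀) e).continuousAt)
    ((dd_contDiffAt (n := 1) (b1_cd k s hx₀) e).continuousAt)
    ((dd_contDiffAt (n := 1) (b2_cd k s hx₀) e).continuousAt) z₀
  have hev := cq.eventually_ne hq₀
  rw [nhds_prod_eq, Filter.eventually_prod_iff] at hev
  obtain ⟨p1, hp1, p2, hp2, hpq⟩ := hev
  have n1 : prj k ⁻¹' {x | p1 x} ∈ 𝓝 z₀ := (prj k).continuous.continuousAt.preimage_mem_nhds hp1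
  have n2 : {w | 0 < s * cc w k} ∈ 𝓝 z₀ :=
      (isOpen_lt continuous_const (continuous_const.mul (cc_cont k))).mem_nhds hk
  obtain ⟨r, hr, hrs⟩ := Metric.nhds_basis_closedBall.mem_iff.1 (inter_mem n1 n2)
  obtain ⟨r', hr', hrs'⟩ := Metric.nhds_basis_closedBall.mem_iff.1 hp2
  refine ⟨r, hr, fun h hh hsup => ?_⟩
  set G : E3 → ℂ := (UU k).indicator (fun x => (JJ k s x : ℂ) * h (Ph k s x)) with hGdef
  set K₀ : Set E3 := prj k '' (bD ∩ Metric.closedBall z₀ r) with hK₀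
  have hK₀c : IsCompact K₀ := (bD_compact.inter_right Metric.isClosed_closedBall).image (prj k).continuous
  have hK₀U : K₀ ⊆ UU k := by
    rintro _ ⟨w, ⟨hw, hwr⟩, rfl⟩
    exact (Ph_prj k hs hw (hrs hwr).2).1
  have hK₀p : ∀ x ∈ K₀, p1 x := by
    rintro _ ⟨w, ⟨hw, hwr⟩, rfl⟩
    exact (hrs hwr).1
  have hh0 : ∀ w ∉ Metric.closedBall z₀ r, h w = 0 := fun w hw =>
    image_eq_zero_of_notMem_tsupport fun hc => hw (hsup hc)
  have hG0 : ∀ x ∉ K₀, G x = 0 := by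
    intro x hx
    by_cases hxU : x ∈ UU k
    · rw [hGdef, indicator_of_mem hxU, hh0, mul_zero]
      intro hc
      exact hx ⟨_, ⟨(Ph_mem k hs hxU).1, hc⟩, prj_Ph k s x⟩
    · exact indicator_of_notMem hxU _
  have hGs : tsupport G ⊆ K₀ := by
    refine closure_minimal ?_ hK₀c.isClosed
    intro x hx
    by_contra hxK
    exact hx (hG0 x hxK)
  have hGc : HasCompactSupport G := HasCompactSupport.intro hK₀c hG0
  have hG : ContDiff ℝ 1 G := by
    rw [contDiff_iff_contDiffAt]
    intro x
    by_cases hx : x ∈ UU k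
    · have h1 : ContDiffAt ℝ 1 (fun x => (JJ k s x : ℂ) * h (Ph k s x)) x :=
        (ofRealCLM.contDiff.contDiffAt.comp x (JJ_contDiffAt k s hx)).mul
          (hh.contDiffAt.comp x ((Ph_contDiffAt k s hx).of_le (by norm_num)))
      refine h1.congr_of_eventuallyEq ?_
      filter_upwards [(UU_open k).mem_nhds hx] with y hy
      exact indicator_of_mem hy _
    · have h1 : x ∉ tsupport G := fun hc => hx (hK₀U (hGs hc))
      exact contDiffAt_const.congr_of_eventuallyEq (notMem_tsupport_iff_eventuallyEq.1 h1)
  obtain ⟨l, hl⟩ := ibp_limit (μH[3] : Measure E3) (UU_open k) (a := aa k s) (b₁ := b₁) (b₂ := b₂)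
    (fun x hx => aa_cd k s hx) (fun x hx => b1_cd k s hx) (fun x hx => b2_cd k s hx) e hG hGc
    (hGs.trans hK₀U) (z₀ := z₀) (W := Metric.closedBall z₀ r') (Ds := Din)
    (isCompact_closedBall _ _) (Metric.closedBall_mem_nhds _ hr')
    (fun x hx z hz => hpq (hK₀p x (hGs hx)) (hrs' hz)) (prj k).continuous (c := 1/24) (by norm_num)
    (by
      intro x hx z hz
      rw [aff_Delta]
      have hxb : rho (Ph k s x) = 0 := (Ph_mem k hs (hK₀U (hGs hx))).1
      have hzr : rho z < 0 := hz.2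
      have h1 := Delta_lower (Ph k s x) z
      rw [Fin.sum_univ_succAbove _ k] at h1
      have h2 : 0 ≤ (cc (Ph k s x) k - cc z k) ^ ex k := (ex_even k).pow_nonneg _
      simp only [cc_Ph_succ, ← Finset.sum_div] at h1
      have h3 := prod_low_k k (y := fun i => x i - prj k z i) (fun i => by
        have h4 := bD_coord hxb.le (k.succAbove i)
        have h5 := bD_coord hzr.le (k.succAbove i)
        rw [cc_Ph_succ] at h4
        rw [prj_apply]
        exact (abs_sub _ _).trans (by linarith))
      simp only [prj_apply] at h3 ⊢
      have h6 := Complex.re_le_norm (Delta (Ph k s x) z)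
      linarith)
    (by
      intro x hx z hz h0
      rw [aff_Delta] at h0
      have hxb : rho (Ph k s x) = 0 := (Ph_mem k hs (hK₀U (hGs hx))).1
      have hzr : rho z < 0 := hz.2
      have := Delta_ne hxb hzr.le (Or.inl hzr)
      rw [h0] at this
      simp at this)
    (by
      intro x hx hxne h0
      rw [aff_Delta] at h0
      have hxb : rho (Ph k s x) = 0 := (Ph_mem k hs (hK₀U (hGs hx))).1
      have hzr : rho z₀ = 0 := hz₀
      have := Delta_ne hxb hzr.le (Or.inr fun hc => hxne (by rw [← hc, prj_Ph]))
      rw [h0] at this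
      simp at this)
  refine ⟨l, hl.congr fun z => ?_⟩
  have hset : MeasurableSet {w | w ∈ bD ∧ 0 < s * cc w k} :=
    bD_closed.measurableSet.inter
      (isOpen_lt continuous_const (continuous_const.mul (cc_cont k))).measurableSet
  have e1 : ∫ w in bD, h w / (Delta w z) ^ 2 ∂μH[3]
      = ∫ w in {w | w ∈ bD ∧ 0 < s * cc w k}, h w / (Delta w z) ^ 2 ∂μH[3] := by
    refine setIntegral_eq_of_subset_of_forall_diff_eq_zero bD_closed.measurableSet
      (fun w hw => hw.1) ?_
    intro w hw
    rw [hh0 w, zero_div]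
    intro hc
    exact hw.2 ⟨hw.1, (hrs hc).2⟩
  have hDm : Measurable (fun w => Delta w z) :=
    (Delta_cont.comp (Continuous.prodMk_left z)).measurable
  rw [e1, chart_integral k hs (h := fun w => h w / (Delta w z) ^ 2)
    (hh.continuous.measurable.div (hDm.pow_const 2)).aestronglyMeasurable,
    ← integral_indicator (UU_open k).measurableSet]
  refine integral_congr_ae (Eventually.of_forall fun x => ?_)
  simp only [hb₁, hb₂, aff_Delta, hGdef]
  by_cases hx : x ∈ UU k
  · simp only [indicator_of_mem hx, mul_div_assoc]
  · simp only [indicator_of_notMem hx, zero_div]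

end Loc

section Glob
open Module Set Filter Topology
open scoped NNReal

theorem cc_grad (z : C2) (k : Fin 4) : cc (gradRho z) k = ex k * cc z k ^ (ex k - 1) := by
  fin_cases k <;> simp [cc, gradRho, ex, pow_succ]

theorem grad_ge {z : C2} (hz : z ∈ bD) : 1 ≤ ‖gradRho z‖ := by
  have hz' : rho z = 0 := hz
  rw [rho_eq] at hz'
  have h : 1 ≤ ‖gradRho z‖ ^ 2 := by
    rw [norm_sq_C2]
    simp only [cc_grad, Fin.sum_univ_four] at hz' ⊢
    simp [ex] at hz' ⊢
    nlinarith [sq_nonneg (cc z 1 ^ 2), sq_nonneg (cc z 1), mul_nonneg (sq_nonneg (cc z 1)) (sq_nonneg (4 * cc z 1 ^2 - 1 / 2)), sq_nonneg (cc z 0)]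
  nlinarith [norm_nonneg (gradRho z)]

theorem zeps_dist {z : C2} (hz : z ∈ bD) {ε : ℝ} (he : 0 ≤ ε) :
    dist (z + ε • Nvec z) z = ε := by
  have h := grad_ge hz
  rw [dist_eq_norm, add_sub_cancel_left, Nvec, norm_smul, norm_smul]
  simp [abs_of_nonneg he]
  rw [inv_mul_cancel₀ (by linarith), mul_one]

theorem zeps_mem {z : C2} (hz : z ∈ bD) {ε : ℝ} (he : 0 < ε) (he' : ε < 1/4) :
    z + ε • Nvec z ∈ Din := by
  have h := grad_ge hz
  set t := ε * ‖gradRho z‖⁻¹ with ht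
  have ht0 : 0 < t := by positivity
  have ht1 : t < 1/4 := by
    have : ‖gradRho z‖⁻¹ ≤ 1 := inv_le_one_of_one_le₀ h
    nlinarith
  have hcc : ∀ k, cc (z + ε • Nvec z) k = cc z k * (1 - t * (ex k * cc z k ^ (ex k - 2))) := by
    intro k
    rw [Nvec, cc_add, cc_smul, cc_smul, cc_grad, ht]
    fin_cases k <;> simp [ex] <;> ring
  have hz' : rho z = 0 := hz
  have hb := bD_coord hz'.le
  have hfac : ∀ k, cc z k ≠ 0 → 0 < t * (ex k * cc z k ^ (ex k - 2)) ∧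
      t * (ex k * cc z k ^ (ex k - 2)) < 1 := by
    intro k hk
    fin_cases k
    · simp [ex]; constructor <;> linarith
    · have h1 := hb 1
      have h2 : 0 < cc z 1 ^ 2 := by
        have : cc z 1 ≠ 0 := hk
        positivity
      have h3 : cc z 1 ^ 2 ≤ 1 := by rw [← sq_abs]; nlinarith [abs_nonneg (cc z 1)]
      simp [ex]
      constructor
      · positivity
      · nlinarith
    · simp [ex]; constructor <;> linarith
    · simp [ex]; constructor <;> linarith
  have hlt : ∀ k, cc z k ≠ 0 → cc (z + ε • Nvec z) k ^ ex k < cc z k ^ ex k := by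
    intro k hk
    obtain ⟨a, b⟩ := hfac k hk
    rw [hcc, mul_pow]
    have h1 : (1 - t * (ex k * cc z k ^ (ex k - 2))) ^ ex k < 1 :=
      pow_lt_one₀ (by linarith) (by linarith) (ex_ne k)
    have h2 : 0 < cc z k ^ ex k := (ex_even k).pow_pos hk
    nlinarith
  have hle : ∀ k, cc (z + ε • Nvec z) k ^ ex k ≤ cc z k ^ ex k := by
    intro k
    by_cases hk : cc z k = 0
    · rw [hcc, hk, zero_mul]
    · exact (hlt k hk).le
  change rho _ < 0
  rw [← hz', rho_eq, rho_eq]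
  obtain ⟨k, hk⟩ : ∃ k, cc z k ≠ 0 := by
    obtain ⟨k, s, -, hk⟩ := exists_chart hz
    exact ⟨k, by rintro h; simp [h] at hk⟩
  have := Finset.sum_lt_sum (fun k _ => hle k) ⟨k, Finset.mem_univ k, hlt k hk⟩
  linarith

theorem zeps_tendsto {z : C2} (hz : z ∈ bD) :
    Tendsto (fun ε : ℝ => z + ε • Nvec z) (𝓝[>] 0) (𝓝[Din] z) := by
  refine tendsto_nhdsWithin_iff.2 ⟨?_, ?_⟩
  · have : Continuous (fun ε : ℝ => z + ε • Nvec z) := by fun_prop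
    have h := this.tendsto 0
    simp only [zero_smul, add_zero] at h
    exact h.mono_left nhdsWithin_le_nhds
  · filter_upwards [Ioo_mem_nhdsGT (show (0:ℝ) < 1/4 by norm_num)] with ε he
    exact zeps_mem hz he.1 he.2

def FF (f : C2 → ℂ) (z : C2) : ℂ := ∫ w in bD, f w / (Delta w z) ^ 2 ∂μH[3]

theorem kernel_bound {g : C2 → ℂ} (hg : Continuous g) {C Z : Set C2} (hC : IsCompact C)
    (hZ : IsCompact Z) (hne : ∀ w ∈ C, ∀ z ∈ Z, Delta w z ≠ 0) :
    ∃ M, 0 ≤ M ∧ ∀ w ∈ C, ∀ z ∈ Z, ‖g w / (Delta w z) ^ 2‖ ≤ M := by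
  have hco : ContinuousOn (fun p : C2 × C2 => g p.1 / (Delta p.1 p.2) ^ 2) (C ×ˢ Z) := by
    refine ContinuousOn.div (hg.comp continuous_fst).continuousOn (Delta_cont.pow 2).continuousOn ?_
    intro p hp
    exact pow_ne_zero 2 (hne p.1 hp.1 p.2 hp.2)
  obtain ⟨M, hM⟩ := (hC.prod hZ).exists_bound_of_continuousOn hco
  exact ⟨max M 0, le_max_right _ _, fun w hw z hz => (hM (w, z) ⟨hw, hz⟩).trans (le_max_left _ _)⟩

theorem kernel_meas {g : C2 → ℂ} (hg : Continuous g) (z : C2) (ν : Measure C2) :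
    AEStronglyMeasurable (fun w => g w / (Delta w z) ^ 2) ν := by
  have hDm : Measurable (fun w => Delta w z) :=
    (Delta_cont.comp (Continuous.prodMk_left z)).measurable
  exact (hg.measurable.div (hDm.pow_const 2)).aestronglyMeasurable

theorem kernel_integrable {g : C2 → ℂ} (hg : Continuous g) {z : C2} (hz : z ∈ Din) :
    Integrable (fun w => g w / (Delta w z) ^ 2) ((μH[3] : Measure C2).restrict bD) := by
  have hz' : rho z < 0 := hz
  obtain ⟨M, -, hM⟩ := kernel_bound hg bD_compact (isCompact_singleton (x := z)) (by
    intro w hw y hy h0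
    rw [mem_singleton_iff] at hy
    subst hy
    have := Delta_ne hw hz'.le (Or.inl hz')
    rw [h0] at this
    simp at this)
  refine Integrable.of_bound (kernel_meas hg z _) M ?_
  filter_upwards [ae_restrict_mem bD_closed.measurableSet] with w hw
  exact hM w hw z rfl

theorem far_limit {g : C2 → ℂ} (hg : Continuous g) {z₀ : C2} {δ : ℝ} (hδ : 0 < δ)
    (h0 : ∀ w ∈ Metric.ball z₀ δ, g w = 0) (hz₀ : z₀ ∈ bD) :
    Tendsto (FF g) (𝓝[Din] z₀) (𝓝 (FF g z₀)) := by
  have hzz : rho z₀ = 0 := hz₀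
  set Z := Metric.closedBall z₀ (δ/2) ∩ {z | rho z ≤ 0} with hZ
  have hZc : IsCompact Z := (isCompact_closedBall _ _).inter_right
    (isClosed_le rho_cont continuous_const)
  set C := bD \ Metric.ball z₀ δ with hC
  have hCc : IsCompact C := bD_compact.diff Metric.isOpen_ball
  have hne : ∀ w ∈ C, ∀ z ∈ Z, Delta w z ≠ 0 := by
    intro w hw z hz h0
    have := Delta_ne hw.1 hz.2 (Or.inr (by
      rintro rfl
      have h1 : dist w z₀ ≤ δ/2 := hz.1
      have h2 : ¬ dist w z₀ < δ := hw.2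
      linarith))
    rw [h0] at this
    simp at this
  obtain ⟨M, hM0, hM⟩ := kernel_bound hg hCc hZc hne
  refine tendsto_integral_filter_of_dominated_convergence (fun _ => M) ?_ ?_ (integrable_const _) ?_
  · exact Eventually.of_forall fun z => kernel_meas hg z _
  · have : Metric.closedBall z₀ (δ/2) ∈ 𝓝[Din] z₀ :=
      mem_nhdsWithin_of_mem_nhds (Metric.closedBall_mem_nhds _ (by linarith))
    filter_upwards [this, self_mem_nhdsWithin] with z hz hzD
    filter_upwards [ae_restrict_mem bD_closed.measurableSet] with w hw
    by_cases hwb : w ∈ Metric.ball z₀ δ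
    · rw [h0 w hwb]; simpa using hM0
    · exact hM w ⟨hw, hwb⟩ z ⟨hz, (show rho z < 0 from hzD).le⟩
  · filter_upwards [ae_restrict_mem bD_closed.measurableSet] with w hw
    by_cases hwb : w ∈ Metric.ball z₀ δ
    · simp only [h0 w hwb, zero_div]; exact tendsto_const_nhds
    · have hc : Continuous (fun z => Delta w z) := Delta_cont.comp (Continuous.prodMk_right w)
      refine Tendsto.div tendsto_const_nhds (((hc.tendsto z₀).mono_left nhdsWithin_le_nhds).pow 2) ?_
      exact pow_ne_zero 2 (hne w ⟨hw, hwb⟩ z₀ ⟨Metric.mem_closedBall_self (by linarith), hzz.le⟩)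

theorem full_limit {f : C2 → ℂ} (hf : ContDiff ℝ 1 f) {z₀ : C2} (hz₀ : z₀ ∈ bD) :
    ∃ l, Tendsto (FF f) (𝓝[Din] z₀) (𝓝 l) := by
  obtain ⟨r, hr, hloc⟩ := local_limit hz₀
  let χ : ContDiffBump z₀ := ⟨r/2, r, by linarith, by linarith⟩
  have hχ : ContDiff ℝ 1 (fun w => ((χ w : ℝ) : ℂ)) := ofRealCLM.contDiff.comp χ.contDiff
  have h1 : ContDiff ℝ 1 (fun w => ((χ w : ℝ) : ℂ) * f w) := hχ.mul hf
  obtain ⟨l, hl⟩ := hloc _ h1 (by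
    refine closure_minimal ?_ Metric.isClosed_closedBall
    intro w hw
    by_contra hc
    apply hw
    have : χ w = 0 := χ.zero_of_le_dist (by
      have : ¬ dist w z₀ ≤ r := hc
      exact (not_le.1 this).le)
    simp [this])
  have h2 := far_limit (g := fun w => (1 - ((χ w : ℝ) : ℂ)) * f w)
    ((continuous_const.sub hχ.continuous).mul hf.continuous) (z₀ := z₀) (δ := r/2) (by linarith)
    (by
      intro w hw
      have : χ w = 1 := χ.one_of_mem_closedBall (Metric.ball_subset_closedBall hw)
      simp [this]) hz₀
  refine ⟨_, (hl.add h2).congr' ?_⟩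
  filter_upwards [self_mem_nhdsWithin] with z hz
  rw [FF, FF, ← integral_add (kernel_integrable h1.continuous hz) (kernel_integrable
    (g := fun w => (1 - ((χ w : ℝ) : ℂ)) * f w) ((continuous_const.sub hχ.continuous).mul hf.continuous) hz)]
  refine integral_congr_ae (Eventually.of_forall fun w => ?_)
  simp only
  ring

theorem part1 {f : C2 → ℂ} (hf : ContDiff ℝ 1 f) : ∃ Cf, IsCLBoundaryValue f Cf := by
  have hex : ∀ z : C2, ∃ l, z ∈ bD → Tendsto (FF f) (𝓝[Din] z) (𝓝 l) := by
    intro z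
    by_cases hz : z ∈ bD
    · obtain ⟨l, hl⟩ := full_limit hf hz
      exact ⟨l, fun _ => hl⟩
    · exact ⟨0, fun h => absurd h hz⟩
  choose Cf hCf using hex
  refine ⟨Cf, ?_⟩
  rw [IsCLBoundaryValue, ← tendstoLocallyUniformlyOn_iff_tendstoUniformlyOn_of_compact bD_compact,
    Metric.tendstoLocallyUniformlyOn_iff]
  intro η hη z₀ hz₀
  have h1 := Metric.tendsto_nhdsWithin_nhds.1 (hCf z₀ hz₀) (η/2) (by linarith)
  obtain ⟨δ, hδ, h1⟩ := h1
  refine ⟨Metric.ball z₀ (δ/2) ∩ bD, inter_mem (mem_nhdsWithin_of_mem_nhds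
    (Metric.ball_mem_nhds _ (by linarith))) self_mem_nhdsWithin, ?_⟩
  have hm : (0:ℝ) < min (δ/2) (1/4) := by positivity
  filter_upwards [Ioo_mem_nhdsGT hm] with ε he z hz
  have hzb : dist z z₀ < δ/2 := hz.1
  have key : ∀ ε' ∈ Ioo (0:ℝ) (min (δ/2) (1/4)), dist (FF f (z + ε' • Nvec z)) (Cf z₀) < η/2 := by
    intro ε' he'
    have a := he'.2.trans_le (min_le_left _ _)
    have b := he'.2.trans_le (min_le_right _ _)
    refine h1 (zeps_mem hz.2 he'.1 b) ?_
    have := dist_triangle (z + ε' • Nvec z) z z₀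
    rw [zeps_dist hz.2 he'.1.le] at this
    linarith
  have h2 : dist (Cf z) (Cf z₀) ≤ η/2 := by
    have ht : Tendsto (fun ε : ℝ => dist (FF f (z + ε • Nvec z)) (Cf z₀)) (𝓝[>] 0)
      (𝓝 (dist (Cf z) (Cf z₀))) := ((hCf z hz.2).comp (zeps_tendsto hz.2)).dist tendsto_const_nhds
    refine le_of_tendsto ht ?_
    filter_upwards [Ioo_mem_nhdsGT hm] with ε' he'
    exact (key ε' he').le
  have h3 := key ε he
  have h4 := dist_triangle_right (Cf z) (FF f (z + ε • Nvec z)) (Cf z₀)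
  change dist (Cf z) (FF f (z + ε • Nvec z)) < η
  linarith

end Glob

section Unb
open Module Set Filter Topology
open scoped NNReal

theorem ker_alg {t u v x y u' v' x' y' : ℝ} (ht : 0 < t) (ht' : t ≤ 1/10)
    (hu : |u| ≤ t^5/16) (hv : |v| ≤ t^2/16) (hy : |y + u*v| ≤ t^8/16)
    (hu1 : t^4 ≤ u') (hu2 : u' ≤ 2*t^4) (hv' : |v'| ≤ t^3/16) (hy' : |y'| ≤ t^8/16)
    (hx : 0 < x) (hx' : 0 < x') (h1 : u^2+v^4+x^2+y^2 = 1) (h2 : u'^2+v'^4+x'^2+y'^2=1) :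
    (9/20*t^8 ≤ u*(u-u')+2*v^3*(v-v')+x*(x-x')+y*(y-y') ∧
     u*(u-u')+2*v^3*(v-v')+x*(x-x')+y*(y-y') ≤ 3*t^8) ∧
    |u*(v-v') - 2*v^3*(u-u') + x*(y-y') - y*(x-x')| ≤ t^8/5 := by
  have q4 : 0 < t^4 := by positivity
  have q8 : 0 < t^8 := by positivity
  have p2 : t^2 ≤ (1/10)^2 := pow_le_pow_left₀ ht.le ht' 2
  have p4 : t^4 ≤ (1/10)^4 := pow_le_pow_left₀ ht.le ht' 4
  have p3 : t^3 ≤ t^2/10 := by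
    have := mul_le_mul_of_nonneg_left ht' (sq_nonneg t)
    linarith [show t^2*t = t^3 by ring]
  have p5 : t^5 ≤ t^4/10 := by
    have := mul_le_mul_of_nonneg_left ht' q4.le
    linarith [show t^4*t = t^5 by ring]
  have p8 : t^8 ≤ t^4/10000 := by
    have := mul_le_mul_of_nonneg_left p4 q4.le
    linarith [show t^4*t^4 = t^8 by ring]
  have p10 : t^10 ≤ t^8/100 := by
    have := mul_le_mul_of_nonneg_left p2 q8.le
    linarith [show t^8*t^2 = t^10 by ring]
  have p12 : t^12 ≤ t^8/10000 := by
    have := mul_le_mul_of_nonneg_left p4 q8.le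
    linarith [show t^8*t^4 = t^12 by ring]
  have p16 : t^16 ≤ t^8/1000000 := by
    have := mul_le_mul_of_nonneg_left (show t^8 ≤ 1/1000000 by linarith) q8.le
    linarith [show t^8*t^8 = t^16 by ring]
  have au : |u| ≤ t^4/160 := by linarith
  have av' : |v'| ≤ t^2/160 := by linarith
  have auv : |u*v| ≤ t^4 * (1/10000) := by
    rw [abs_mul]
    have := mul_le_mul au (show |v| ≤ 1/1600 by linarith) (abs_nonneg _) (by positivity)
    linarith
  have ay : |y| ≤ t^4/1000 := by
    have : |y| ≤ |y+u*v| + |u*v| := by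
      have := abs_sub (y+u*v) (u*v)
      simpa using this
    linarith
  have ay' : |y'| ≤ t^4/1000 := by linarith
  have pw : ∀ {a b : ℝ} (n : ℕ), Even n → |a| ≤ b → a^n ≤ b^n := fun {a b} n hn h => by
    rw [← hn.pow_abs]; exact pow_le_pow_left₀ (abs_nonneg _) h n
  have su2 := pw 2 (by decide) au
  have sv2 := pw 2 (by decide) hv
  have sv'2 := pw 2 (by decide) av'
  have sv4 := pw 4 (by decide) hv
  have sv'4 := pw 4 (by decide) av'
  have sy2 := pw 2 (by decide) ay
  have sy'2 := pw 2 (by decide) ay'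
  have su'2 : u'^2 ≤ (2*t^4)^2 := pow_le_pow_left₀ (by linarith) hu2 2
  rw [show (t^4/160)^2 = t^8/25600 by ring] at su2
  rw [show (t^4/1000)^2 = t^8/1000000 by ring] at sy2 sy'2
  rw [show (t^2/16)^4 = t^8/65536 by ring] at sv4
  rw [show (t^2/160)^4 = t^8/655360000 by ring] at sv'4
  rw [show (t^2/160)^2 = t^4/25600 by ring] at sv'2
  rw [show (t^2/16)^2 = t^4/256 by ring] at sv2
  rw [show (2*t^4)^2 = 4*t^8 by ring] at su'2
  obtain ⟨u_l, u_u⟩ := abs_le.1 au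
  have v40 : 0 ≤ v^4 := by positivity
  have v'40 : 0 ≤ v'^4 := by positivity
  have x1 : x ≤ 1 := by
    refine (sq_le_one_iff₀ (by positivity)).1 ?_
    linarith [sq_nonneg u, sq_nonneg y]
  have x1' : x' ≤ 1 := by
    refine (sq_le_one_iff₀ (by positivity)).1 ?_
    linarith [sq_nonneg u', sq_nonneg y']
  have dx : 1 - x ≤ t^8/100 := by
    have : x^2 ≤ x := by rw [sq]; exact mul_le_of_le_one_left hx.le x1
    linarith
  have dx' : 1 - x' ≤ 41/10*t^8 := by
    have : x'^2 ≤ x' := by rw [sq]; exact mul_le_of_le_one_left hx'.le x1'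
    linarith
  have hxx := pw 2 (by decide) (show |x-x'| ≤ 5*t^8 from abs_le.2 ⟨by linarith, by linarith⟩)
  rw [show (5*t^8)^2 = 25*t^16 by ring] at hxx
  have hyy : (y-y')^2 ≤ t^8/100 := by
    have : (y-y')^2 = 2*y^2+2*y'^2 - (y+y')^2 := by ring
    linarith [sq_nonneg (y+y')]
  have huu := pw 2 (by decide) (show |u-u'| ≤ (2+1/160)*t^4 from abs_le.2 ⟨by linarith, by linarith⟩)
  rw [show ((2+1/160)*t^4)^2 = (2+1/160)^2*t^8 by ring] at huu
  have huu' : ((1-1/160)*t^4)^2 ≤ (u'-u)^2 := pow_le_pow_left₀ (by positivity) (by linarith) 2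
  rw [show ((1-1/160)*t^4)^2 = (1-1/160)^2*t^8 by ring, show (u'-u)^2 = (u-u')^2 by ring] at huu'
  have a3 : 0 ≤ 3*v^2+2*v*v'+v'^2 := by
    have : 3*v^2+2*v*v'+v'^2 = (v+v')^2+2*v^2 := by ring
    rw [this]; positivity
  have hvv0 : 0 ≤ (v-v')^2*(3*v^2+2*v*v'+v'^2) := mul_nonneg (sq_nonneg _) a3
  have hvv : (v-v')^2*(3*v^2+2*v*v'+v'^2) ≤ t^8/100 := by
    have a1 : (v-v')^2 ≤ t^4/10 := by
      have : (v-v')^2 = 2*v^2+2*v'^2-(v+v')^2 := by ring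
      linarith [sq_nonneg (v+v')]
    have a2 : 3*v^2+2*v*v'+v'^2 ≤ t^4/10 := by
      have : 3*v^2+2*v*v'+v'^2 = 4*v^2+2*v'^2-(v-v')^2 := by ring
      linarith [sq_nonneg (v-v')]
    have := mul_le_mul a1 a2 a3 (by positivity)
    linarith [show t^4/10*(t^4/10) = t^8/100 by ring]
  have hre : 2*(u*(u-u')+2*v^3*(v-v')+x*(x-x')+y*(y-y')) = (u-u')^2+(x-x')^2+(y-y')^2
      + (v-v')^2*(3*v^2+2*v*v'+v'^2) := by linear_combination h1 - h2
  refine ⟨⟨?_, ?_⟩, ?_⟩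
  · linarith [sq_nonneg (x-x'), sq_nonneg (y-y')]
  · linarith
  · have b1 : |u*v'| ≤ t^8/256 := by
      rw [abs_mul]
      have := mul_le_mul hu hv' (abs_nonneg _) (by positivity)
      linarith [show t^5/16*(t^3/16) = t^8/256 by ring]
    have b2 : |2*v^3*(u-u')| ≤ t^8/1000 := by
      have c1 : |v|^3 ≤ (t^2/16)^3 := pow_le_pow_left₀ (abs_nonneg _) hv 3
      have c2 : |u-u'| ≤ 3*t^4 := abs_le.2 ⟨by linarith, by linarith⟩
      have c3 := mul_le_mul c1 c2 (abs_nonneg _) (by positivity)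
      rw [abs_mul, abs_mul, abs_pow, abs_two]
      linarith [show (t^2/16)^3*(3*t^4) = t^10*(3/4096) by ring]
    have b3 : |x*y'| ≤ t^8/16 := by
      rw [abs_mul, abs_of_pos hx]
      exact (mul_le_of_le_one_left (abs_nonneg _) x1).trans hy'
    have b4 : |y*(x'-1)| ≤ t^8/100 := by
      rw [abs_mul]
      have c1 : |x'-1| ≤ 5*t^8 := abs_le.2 ⟨by linarith, by linarith⟩
      have := mul_le_mul ay c1 (abs_nonneg _) (by positivity)
      linarith [show t^4/1000*(5*t^8) = t^12/200 by ring]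
    obtain ⟨b1l, b1u⟩ := abs_le.1 b1
    obtain ⟨b2l, b2u⟩ := abs_le.1 b2
    obtain ⟨b3l, b3u⟩ := abs_le.1 b3
    obtain ⟨b4l, b4u⟩ := abs_le.1 b4
    obtain ⟨hyl, hyu⟩ := abs_le.1 hy
    have e : u*(v-v') - 2*v^3*(u-u') + x*(y-y') - y*(x-x')
      = (y+u*v) - u*v' - 2*v^3*(u-u') - x*y' + y*(x'-1) := by ring
    rw [e]
    exact abs_le.2 ⟨by linarith, by linarith⟩

theorem re_inv_sq {d : ℂ} {T : ℝ} (hT : 0 < T) (h1 : 9/20*T ≤ d.re) (h2 : d.re ≤ 3*T)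
    (h3 : |d.im| ≤ T/5) : 1/(1000*T^2) ≤ ((d^2)⁻¹).re := by
  obtain ⟨a, b⟩ := d
  simp only at h1 h2 h3
  have hb : b^2 ≤ T^2/25 := by rw [← sq_abs]; nlinarith [abs_nonneg b]
  have ha : 81/400*T^2 ≤ a^2 := by nlinarith
  have ha' : a^2 ≤ 9*T^2 := by nlinarith
  have hT2 : 0 < T^2 := by positivity
  rw [Complex.inv_re, Complex.normSq_apply]
  simp only [sq, Complex.mul_re, Complex.mul_im]
  have e : (a * a - b * b) * (a * a - b * b) + (a * b + b * a) * (a * b + b * a) = (a^2+b^2)^2 := by ring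
  rw [e, div_le_div_iff₀ (by positivity) (pow_pos (by linarith [sq_nonneg b]) 2)]
  have c1 : (a^2+b^2)^2 ≤ (10*T^2)^2 := by
    apply pow_le_pow_left₀ (by positivity); linarith
  have c2 : 4/25*T^2 ≤ a*a-b*b := by nlinarith
  nlinarith

def PL (l : ℝ) (w : C2) : Fin 3 → ℝ := ![cc w 0, cc w 1, cc w 3 + l * (cc w 0 * cc w 1)]
def Box (l : ℝ) (a b : Fin 3 → ℝ) : Set C2 := {w | w ∈ bD ∧ 0 < cc w 2 ∧ PL l w ∈ Icc a b}

theorem Box_abs {l : ℝ} {a b : Fin 3 → ℝ} (hl : l ∈ Icc (0:ℝ) 1) (ha : ∀ i, -(1/4) ≤ a i)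
    (hb : ∀ i, b i ≤ 1/4) {w : C2} (hw : w ∈ Box l a b) :
    |cc w 0| ≤ 1/4 ∧ |cc w 1| ≤ 1/4 ∧ |cc w 3| ≤ 1/2 ∧ 1/2 ≤ cc w 2 ∧
      cc w 0^2+cc w 1^4+cc w 2^2+cc w 3^2 = 1 := by
  obtain ⟨hw, hx, h1, h2⟩ := hw
  have hr : cc w 0^2+cc w 1^4+cc w 2^2+cc w 3^2 = 1 := by
    have : rho w = 0 := hw
    rw [rho_eq, Fin.sum_univ_four] at this
    simp [ex] at this
    linarith
  have k0 : |cc w 0| ≤ 1/4 := by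
    have := h1 0; have := h2 0; have := ha 0; have := hb 0
    simp [PL] at *
    exact abs_le.2 ⟨by linarith, by linarith⟩
  have k1 : |cc w 1| ≤ 1/4 := by
    have := h1 1; have := h2 1; have := ha 1; have := hb 1
    simp [PL] at *
    exact abs_le.2 ⟨by linarith, by linarith⟩
  have k2 : |l * (cc w 0 * cc w 1)| ≤ 1/16 := by
    rw [abs_mul, abs_mul, abs_of_nonneg hl.1]
    have := mul_le_mul k0 k1 (abs_nonneg _) (by norm_num)
    have h0 : 0 ≤ |cc w 0| * |cc w 1| := by positivity
    nlinarith [hl.1, hl.2]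
  obtain ⟨k3, k4⟩ := abs_le.1 k2
  have k5 : |cc w 3| ≤ 1/2 := by
    have := h1 2; have := h2 2; have := ha 2; have := hb 2
    simp [PL] at *
    exact abs_le.2 ⟨by linarith, by linarith⟩
  refine ⟨k0, k1, k5, ?_, hr⟩
  have s0 : cc w 0 ^2 ≤ 1/16 := by rw [← sq_abs]; nlinarith [abs_nonneg (cc w 0)]
  have s1 : cc w 1 ^2 ≤ 1/16 := by rw [← sq_abs]; nlinarith [abs_nonneg (cc w 1)]
  have s3 : cc w 3 ^2 ≤ 1/4 := by rw [← sq_abs]; nlinarith [abs_nonneg (cc w 3)]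
  have s4 : cc w 1 ^4 ≤ 1/16 := by nlinarith [sq_nonneg (cc w 1)]
  nlinarith

theorem cc_le_dist (w w' : C2) (k : Fin 4) : |cc w k - cc w' k| ≤ dist w w' := by
  rw [← cc_sub, dist_eq_norm]
  have h := norm_sq_C2 (w - w')
  have := Finset.single_le_sum (f := fun k => cc (w-w') k ^ 2) (fun k _ => sq_nonneg _) (Finset.mem_univ k)
  simp only [← h] at this
  exact abs_le_of_sq_le_sq this (norm_nonneg _)

theorem uv_diff {u v u' v' m : ℝ} (hu : |u - u'| ≤ m) (hv : |v - v'| ≤ m) (h1 : |u| ≤ 1/4)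
    (h2 : |v'| ≤ 1/4) : |u*v - u'*v'| ≤ m/2 := by
  have e : u*v-u'*v' = u*(v-v') + (u-u')*v' := by ring
  rw [e]
  refine (abs_add_le _ _).trans ?_
  rw [abs_mul, abs_mul]
  have a := mul_le_mul h1 hv (abs_nonneg _) (by norm_num)
  have b := mul_le_mul hu h2 (abs_nonneg _) ((abs_nonneg _).trans hu)
  linarith

theorem PL_lip {l : ℝ} {a b : Fin 3 → ℝ} (hl : l ∈ Icc (0:ℝ) 1) (ha : ∀ i, -(1/4) ≤ a i)
    (hb : ∀ i, b i ≤ 1/4) {w w' : C2} (hw : w ∈ Box l a b) (hw' : w' ∈ Box l a b) :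
    dist (PL l w) (PL l w') ≤ 2 * dist w w' := by
  obtain ⟨a0, a1, a3, a2, ar⟩ := Box_abs hl ha hb hw
  obtain ⟨b0, b1, b3, b2, br⟩ := Box_abs hl ha hb hw'
  have d := cc_le_dist w w'
  have hd := dist_nonneg (x := w) (y := w')
  have e := uv_diff (d 0) (d 1) a0 b1
  rw [dist_pi_le_iff (by positivity)]
  intro i
  rw [Real.dist_eq]
  fin_cases i
  · simp [PL]; have := d 0; linarith
  · simp [PL]; have := d 1; linarith
  · simp [PL]
    have e1 : cc w 3 + l * (cc w 0 * cc w 1) - (cc w' 3 + l * (cc w' 0 * cc w' 1))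
      = (cc w 3 - cc w' 3) + l * (cc w 0 * cc w 1 - cc w' 0 * cc w' 1) := by ring
    rw [e1]
    refine (abs_add_le _ _).trans ?_
    rw [abs_mul, abs_of_nonneg hl.1]
    have := d 3
    have h0 := abs_nonneg (cc w 0 * cc w 1 - cc w' 0 * cc w' 1)
    nlinarith [hl.1, hl.2]

theorem PL_antilip {l : ℝ} {a b : Fin 3 → ℝ} (hl : l ∈ Icc (0:ℝ) 1) (ha : ∀ i, -(1/4) ≤ a i)
    (hb : ∀ i, b i ≤ 1/4) {w w' : C2} (hw : w ∈ Box l a b) (hw' : w' ∈ Box l a b) :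
    dist w w' ≤ 5 * dist (PL l w) (PL l w') := by
  obtain ⟨a0, a1, a3, a2, ar⟩ := Box_abs hl ha hb hw
  obtain ⟨b0, b1, b3, b2, br⟩ := Box_abs hl ha hb hw'
  set m := dist (PL l w) (PL l w') with hm
  have hm0 : 0 ≤ m := dist_nonneg
  have d0 : |cc w 0 - cc w' 0| ≤ m := by
    have h := dist_le_pi_dist (PL l w) (PL l w') 0
    rw [Real.dist_eq] at h
    exact h
  have d1 : |cc w 1 - cc w' 1| ≤ m := by
    have h := dist_le_pi_dist (PL l w) (PL l w') 1
    rw [Real.dist_eq] at h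
    exact h
  have d2 : |cc w 3 + l * (cc w 0 * cc w 1) - (cc w' 3 + l * (cc w' 0 * cc w' 1))| ≤ m := by
    have h := dist_le_pi_dist (PL l w) (PL l w') 2
    rw [Real.dist_eq] at h
    exact h
  have e := uv_diff d0 d1 a0 b1
  have d3 : |cc w 3 - cc w' 3| ≤ 2 * m := by
    have e1 : cc w 3 - cc w' 3 = (cc w 3 + l * (cc w 0 * cc w 1) - (cc w' 3 + l * (cc w' 0 * cc w' 1)))
      - l * (cc w 0 * cc w 1 - cc w' 0 * cc w' 1) := by ring
    rw [e1]
    refine (abs_sub _ _).trans ?_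
    rw [abs_mul, abs_of_nonneg hl.1]
    have h0 := abs_nonneg (cc w 0 * cc w 1 - cc w' 0 * cc w' 1)
    nlinarith [hl.1, hl.2]
  have sqd : ∀ {p q B M : ℝ}, |p| ≤ B → |q| ≤ B → |p - q| ≤ M → |p^2 - q^2| ≤ 2*B*M := by
    intro p q B M hp hq hpq
    have e1 : p^2-q^2 = (p+q)*(p-q) := by ring
    rw [e1, abs_mul]
    have : |p+q| ≤ 2*B := (abs_add_le _ _).trans (by linarith)
    exact mul_le_mul this hpq (abs_nonneg _) ((abs_nonneg _).trans this)
  have s0 := sqd a0 b0 d0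
  have s1 := sqd a1 b1 d1
  have s3 := sqd a3 b3 d3
  have n1 : |cc w 1 ^2| ≤ 1/4 := by rw [abs_pow]; nlinarith [abs_nonneg (cc w 1)]
  have n1' : |cc w' 1 ^2| ≤ 1/4 := by rw [abs_pow]; nlinarith [abs_nonneg (cc w' 1)]
  have s4 := sqd n1 n1' s1
  have dx : |cc w 2 - cc w' 2| ≤ 4*m := by
    have h1 : (cc w 2 - cc w' 2) * (cc w 2 + cc w' 2) = -(cc w 0^2-cc w' 0^2) - ((cc w 1^2)^2-(cc w' 1^2)^2)
      - (cc w 3^2-cc w' 3^2) := by linear_combination ar - br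
    have h2 : |(cc w 2 - cc w' 2) * (cc w 2 + cc w' 2)| ≤ 4*m := by
      rw [h1]
      obtain ⟨_, _⟩ := abs_le.1 s0
      obtain ⟨_, _⟩ := abs_le.1 s3
      obtain ⟨_, _⟩ := abs_le.1 s4
      exact abs_le.2 ⟨by linarith, by linarith⟩
    rw [abs_mul, abs_of_nonneg (show 0 ≤ cc w 2 + cc w' 2 by linarith)] at h2
    nlinarith [abs_nonneg (cc w 2 - cc w' 2)]
  have hsq : dist w w' ^ 2 ≤ (5*m)^2 := by
    rw [dist_eq_norm, norm_sq_C2, Fin.sum_univ_four]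
    simp only [cc_sub]
    have q : ∀ {p M : ℝ}, |p| ≤ M → p^2 ≤ M^2 := fun {p M} h => by
      rw [← sq_abs]; exact pow_le_pow_left₀ (abs_nonneg _) h 2
    have := q d0; have := q d1; have := q d3; have := q dx
    linarith [sq_nonneg m, show (5*m)^2 = 25*m^2 by ring, show (4*m)^2 = 16*m^2 by ring,
      show (2*m)^2 = 4*m^2 by ring]
  exact le_of_sq_le_sq hsq (by positivity)

end Unb

section Fin2
open Module Set Filter Topology
open scoped NNReal

theorem PL_image {l : ℝ} {a b : Fin 3 → ℝ} (hl : l ∈ Icc (0:ℝ) 1) (ha : ∀ i, -(1/4) ≤ a i)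
    (hb : ∀ i, b i ≤ 1/4) : PL l '' Box l a b = Icc a b := by
  apply subset_antisymm
  · rintro _ ⟨w, hw, rfl⟩
    exact hw.2.2
  · intro p hp
    have k : ∀ i, |p i| ≤ 1/4 := fun i =>
      abs_le.2 ⟨(ha i).trans (hp.1 i), (hp.2 i).trans (hb i)⟩
    have k0 := k 0
    have k1 := k 1
    have k2 := k 2
    set u := p 0
    set v := p 1
    set y := p 2 - l * (u * v) with hy
    have e : |l * (u * v)| ≤ 1/16 := by
      rw [abs_mul, abs_mul, abs_of_nonneg hl.1]
      have := mul_le_mul k0 k1 (abs_nonneg _) (by norm_num)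
      have h0 : 0 ≤ |u| * |v| := by positivity
      nlinarith [hl.1, hl.2]
    have ky : |y| ≤ 1/2 := by
      rw [abs_le] at *
      constructor <;> linarith
    have s0 : u ^2 ≤ 1/16 := by rw [← sq_abs]; nlinarith [abs_nonneg u]
    have s1 : v ^2 ≤ 1/16 := by rw [← sq_abs]; nlinarith [abs_nonneg v]
    have s3 : y ^2 ≤ 1/4 := by rw [← sq_abs]; nlinarith [abs_nonneg y]
    have s4 : v ^4 ≤ 1/16 := by nlinarith [sq_nonneg v]
    have hpos : 0 < 1 - u^2 - v^4 - y^2 := by linarith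
    set x := √(1 - u^2 - v^4 - y^2) with hx
    have hx2 : x^2 = 1 - u^2 - v^4 - y^2 := Real.sq_sqrt hpos.le
    let w : C2 := !₂[(⟨u, v⟩ : ℂ), ⟨x, y⟩]
    have c0 : cc w 0 = u := by simp [cc, w]
    have c1 : cc w 1 = v := by simp [cc, w]
    have c2 : cc w 2 = x := by simp [cc, w]
    have c3 : cc w 3 = y := by simp [cc, w]
    have hPL : PL l w = p := by
      ext i
      fin_cases i
      · simp [PL, c0, u]
      · simp [PL, c1, v]
      · simp [PL, c0, c1, c3, y]
    refine ⟨w, ⟨?_, ?_, ?_⟩, hPL⟩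
    · change rho w = 0
      rw [rho_eq, Fin.sum_univ_four, c0, c1, c2, c3]
      simp [ex, hx2]
      ring
    · rw [c2]; exact Real.sqrt_pos.2 hpos
    · rw [hPL]; exact hp

theorem box_vol {a b : Fin 3 → ℝ} (hab : a ≤ b) :
    (μH[3] : Measure (Fin 3 → ℝ)) (Icc a b) =
      ENNReal.ofReal ((b 0 - a 0) * (b 1 - a 1) * (b 2 - a 2)) := by
  have h := hausdorffMeasure_pi_real (ι := Fin 3)
  have h3 : ((Fintype.card (Fin 3) : ℕ) : ℝ) = 3 := by simp
  rw [h3] at h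
  rw [h, Real.volume_Icc_pi, ← ENNReal.ofReal_prod_of_nonneg (fun i _ => sub_nonneg.2 (hab i)),
    Fin.prod_univ_three]

theorem box_meas_lo {l : ℝ} {a b : Fin 3 → ℝ} (hl : l ∈ Icc (0:ℝ) 1) (ha : ∀ i, -(1/4) ≤ a i)
    (hb : ∀ i, b i ≤ 1/4) (hab : a ≤ b) :
    ENNReal.ofReal ((b 0 - a 0) * (b 1 - a 1) * (b 2 - a 2)) ≤ 8 * μH[3] (Box l a b) := by
  have := hm_image_le (PL l) (id : C2 → C2) 2 (Box l a b) (by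
    intro w hw w' hw'
    simpa using PL_lip hl ha hb hw hw') (d := 3) (by norm_num)
  rw [PL_image hl ha hb, box_vol hab, image_id] at this
  refine this.trans_eq ?_
  congr 1
  rw [show (3:ℝ) = ((3:ℕ):ℝ) by norm_num, ENNReal.rpow_natCast]
  norm_num

theorem box_meas_hi {l : ℝ} {a b : Fin 3 → ℝ} (hl : l ∈ Icc (0:ℝ) 1) (ha : ∀ i, -(1/4) ≤ a i)
    (hb : ∀ i, b i ≤ 1/4) (hab : a ≤ b) :
    μH[3] (Box l a b) ≤ 125 * ENNReal.ofReal ((b 0 - a 0) * (b 1 - a 1) * (b 2 - a 2)) := by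
  have := hm_image_le (id : C2 → C2) (PL l) 5 (Box l a b) (by
    intro w hw w' hw'
    simpa using PL_antilip hl ha hb hw hw') (d := 3) (by norm_num)
  rw [PL_image hl ha hb, box_vol hab, image_id] at this
  refine this.trans_eq ?_
  congr 1
  rw [show (3:ℝ) = ((3:ℕ):ℝ) by norm_num, ENNReal.rpow_natCast]
  norm_num

theorem PL_cont (l : ℝ) : Continuous (PL l) := by
  have h0 := cc_cont 0
  have h1 := cc_cont 1
  have h3 := cc_cont 3
  refine continuous_pi fun i => ?_
  fin_cases i
  · simpa [PL] using h0
  · simpa [PL] using h1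
  · exact Continuous.add h3 (Continuous.mul continuous_const (Continuous.mul h0 h1))

theorem Box_meas (l : ℝ) (a b : Fin 3 → ℝ) : MeasurableSet (Box l a b) := by
  refine bD_closed.measurableSet.inter (MeasurableSet.inter ?_ ?_)
  · exact (isOpen_lt continuous_const (cc_cont 2)).measurableSet
  · exact (isClosed_Icc.preimage (PL_cont l)).measurableSet

def pa (c t : ℝ) : Fin 3 → ℝ := ![-(c*t^5), -(c*t^2), -(c*t^8)]
def pb (c t : ℝ) : Fin 3 → ℝ := ![c*t^5, c*t^2, c*t^8]
def qa (t : ℝ) : Fin 3 → ℝ := ![t^4, -(t^3/16), -(t^8/16)]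
def qb (t : ℝ) : Fin 3 → ℝ := ![2*t^4, t^3/16, t^8/16]

theorem tpow {t : ℝ} (ht : 0 < t) (ht' : t ≤ 1/10) {n : ℕ} (hn : n ≠ 0) : 0 < t^n ∧ t^n ≤ 1/10 :=
  ⟨by positivity, (pow_le_of_le_one ht.le (by linarith) hn).trans ht'⟩

theorem Q1_lo {t : ℝ} (ht : 0 < t) (ht' : t ≤ 1/10) :
    ENNReal.ofReal (t^15/32768) ≤ μH[3] (Box 1 (pa (1/32) t) (pb (1/32) t)) := by
  have p2 := tpow ht ht' (n := 2) (by norm_num)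
  have p5 := tpow ht ht' (n := 5) (by norm_num)
  have p8 := tpow ht ht' (n := 8) (by norm_num)
  have := box_meas_lo (l := 1) (a := pa (1/32) t) (b := pb (1/32) t) (by simp)
    (by intro i; fin_cases i <;> simp [pa] <;> linarith)
    (by intro i; fin_cases i <;> simp [pb] <;> linarith)
    (by intro i; fin_cases i <;> simp [pa, pb] <;> linarith)
  have e : ENNReal.ofReal ((pb (1/32) t 0 - pa (1/32) t 0) * (pb (1/32) t 1 - pa (1/32) t 1) * (pb (1/32) t 2 - pa (1/32) t 2)) = 8 * ENNReal.ofReal (t^15/32768) := by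
    rw [show (8:ℝ≥0∞) = ENNReal.ofReal 8 by norm_num, ← ENNReal.ofReal_mul (by norm_num)]
    congr 1
    simp [pa, pb]
    ring
  rw [e] at this
  exact (ENNReal.mul_le_mul_iff_right (by norm_num) (by norm_num)).1 this

theorem Q2_lo {t : ℝ} (ht : 0 < t) (ht' : t ≤ 1/10) :
    ENNReal.ofReal (t^15/512) ≤ μH[3] (Box 0 (qa t) (qb t)) := by
  have p2 := tpow ht ht' (n := 3) (by norm_num)
  have p5 := tpow ht ht' (n := 4) (by norm_num)
  have p8 := tpow ht ht' (n := 8) (by norm_num)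
  have := box_meas_lo (l := 0) (a := qa t) (b := qb t) (by simp)
    (by intro i; fin_cases i <;> simp [qa] <;> linarith)
    (by intro i; fin_cases i <;> simp [qb] <;> linarith)
    (by intro i; fin_cases i <;> simp [qa, qb] <;> linarith)
  have e : ENNReal.ofReal ((qb t 0 - qa t 0) * (qb t 1 - qa t 1) * (qb t 2 - qa t 2)) = 8 * ENNReal.ofReal (t^15/512) := by
    rw [show (8:ℝ≥0∞) = ENNReal.ofReal 8 by norm_num, ← ENNReal.ofReal_mul (by norm_num)]
    congr 1
    simp [qa, qb]
    ring
  rw [e] at this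
  exact (ENNReal.mul_le_mul_iff_right (by norm_num) (by norm_num)).1 this

theorem Q1_hi {t : ℝ} (ht : 0 < t) (ht' : t ≤ 1/10) :
    μH[3] (Box 1 (pa (1/16) t) (pb (1/16) t)) ≤ 125 * ENNReal.ofReal (t^15/512) := by
  have p2 := tpow ht ht' (n := 2) (by norm_num)
  have p5 := tpow ht ht' (n := 5) (by norm_num)
  have p8 := tpow ht ht' (n := 8) (by norm_num)
  have := box_meas_hi (l := 1) (a := pa (1/16) t) (b := pb (1/16) t) (by simp)
    (by intro i; fin_cases i <;> simp [pa] <;> linarith)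
    (by intro i; fin_cases i <;> simp [pb] <;> linarith)
    (by intro i; fin_cases i <;> simp [pa, pb] <;> linarith)
  refine this.trans_eq ?_
  congr 2
  simp [pa, pb]
  ring

end Fin2

section Bmp
open Module Set Filter Topology
open scoped NNReal

theorem cc_contDiff (k : Fin 4) : ContDiff ℝ 1 (fun w : C2 => cc w k) := by
  let L : C2 →ₗ[ℝ] ℝ := ⟨⟨fun w => cc w k, fun a b => cc_add a b k⟩, fun r a => cc_smul r a k⟩
  exact (LinearMap.toContinuousLinearMap L).contDiff

def th : ContDiffBump (0:ℝ) := ⟨1/2, 1, by norm_num, by norm_num⟩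
def ps : ContDiffBump (1:ℝ) := ⟨1/2, 1, by norm_num, by norm_num⟩

theorem th_one {x : ℝ} (h : |x| ≤ 1/2) : th x = 1 :=
  th.one_of_mem_closedBall (by simpa [th] using h)
theorem th_ne {x : ℝ} (h : th x ≠ 0) : |x| ≤ 1 := by
  have : x ∈ Function.support th := h
  rw [th.support_eq] at this
  simp [th] at this
  exact this.le
theorem ps_one {x : ℝ} (h : 1/2 ≤ x) (h' : x ≤ 1) : ps x = 1 :=
  ps.one_of_mem_closedBall (by
    simp only [ps, Metric.mem_closedBall, Real.dist_eq]
    exact abs_le.2 ⟨by linarith, by linarith⟩)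
theorem ps_ne {x : ℝ} (h : ps x ≠ 0) : 0 < x := by
  have : x ∈ Function.support ps := h
  rw [ps.support_eq] at this
  simp only [ps, Metric.mem_ball, Real.dist_eq] at this
  linarith [(abs_lt.1 this).1]

def ph (t : ℝ) (w : C2) : ℝ := th (16 / t^5 * cc w 0) * th (16 / t^2 * cc w 1) *
  th (16 / t^8 * (cc w 3 + cc w 0 * cc w 1)) * ps (cc w 2)

theorem ph_contDiff (t : ℝ) : ContDiff ℝ 1 (ph t) := by
  have h0 := cc_contDiff 0
  have h1 := cc_contDiff 1
  have h2 := cc_contDiff 2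
  have h3 := cc_contDiff 3
  have ht : ContDiff ℝ 1 th := th.contDiff
  have hp : ContDiff ℝ 1 ps := ps.contDiff
  exact (((ht.comp (contDiff_const.mul h0)).mul (ht.comp (contDiff_const.mul h1))).mul
    (ht.comp (contDiff_const.mul (h3.add (h0.mul h1))))).mul (hp.comp h2)

theorem ph_nonneg (t : ℝ) (w : C2) : 0 ≤ ph t w :=
  mul_nonneg (mul_nonneg (mul_nonneg th.nonneg th.nonneg) th.nonneg) ps.nonneg

theorem ph_le_one (t : ℝ) (w : C2) : ph t w ≤ 1 :=
  mul_le_one₀ (mul_le_one₀ (mul_le_one₀ th.le_one th.nonneg th.le_one) th.nonneg th.le_one)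
    ps.nonneg ps.le_one

theorem scale_le {s x c : ℝ} (hs : 0 < s) : |16 / s * x| ≤ c ↔ |x| ≤ c / 16 * s := by
  rw [abs_mul, abs_of_pos (by positivity), div_mul_eq_mul_div, div_le_iff₀ hs]
  constructor <;> intro h <;> linarith

theorem ph_ne {t : ℝ} (ht : 0 < t) {w : C2} (h : ph t w ≠ 0) :
    0 < cc w 2 ∧ |cc w 0| ≤ t^5/16 ∧ |cc w 1| ≤ t^2/16 ∧ |cc w 3 + cc w 0 * cc w 1| ≤ t^8/16 := by
  have h' := h
  unfold ph at h'
  simp only [mul_ne_zero_iff] at h'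
  obtain ⟨⟨⟨a, b⟩, c⟩, d⟩ := h'
  have a := (scale_le (by positivity)).1 (th_ne a)
  have b := (scale_le (by positivity)).1 (th_ne b)
  have c := (scale_le (by positivity)).1 (th_ne c)
  exact ⟨ps_ne d, by linarith, by linarith, by linarith⟩

theorem ph_Box {t : ℝ} (ht : 0 < t) {w : C2} (hw : w ∈ bD) (h : ph t w ≠ 0) :
    w ∈ Box 1 (pa (1/16) t) (pb (1/16) t) := by
  obtain ⟨d, a, b, c⟩ := ph_ne ht h
  rw [abs_le] at a b c
  refine ⟨hw, d, ?_, ?_⟩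
  · intro i; fin_cases i <;> simp [PL, pa] <;> linarith
  · intro i; fin_cases i <;> simp [PL, pb] <;> linarith

theorem ph_one {t : ℝ} (ht : 0 < t) (ht' : t ≤ 1/10) {w : C2}
    (hw : w ∈ Box 1 (pa (1/32) t) (pb (1/32) t)) : ph t w = 1 := by
  have p2 := tpow ht ht' (n := 2) (by norm_num)
  have p5 := tpow ht ht' (n := 5) (by norm_num)
  have p8 := tpow ht ht' (n := 8) (by norm_num)
  obtain ⟨-, -, -, h2, hr⟩ := Box_abs (l := 1) (a := pa (1/32) t) (b := pb (1/32) t) (by simp)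
    (by intro i; fin_cases i <;> simp [pa] <;> linarith)
    (by intro i; fin_cases i <;> simp [pb] <;> linarith) hw
  have h2' : cc w 2 ≤ 1 := by
    refine (sq_le_one_iff₀ (by linarith)).1 ?_
    have : 0 ≤ cc w 1 ^ 4 := by positivity
    linarith [sq_nonneg (cc w 0), sq_nonneg (cc w 3)]
  obtain ⟨-, -, ha, hb⟩ := hw
  have a0 := ha 0
  have a1 := ha 1
  have a2 := ha 2
  have b0 := hb 0
  have b1 := hb 1
  have b2 := hb 2
  simp [PL, pa] at a0 a1 a2
  simp [PL, pb] at b0 b1 b2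
  unfold ph
  rw [th_one, th_one, th_one, ps_one h2 h2']
  · norm_num
  · rw [scale_le (by positivity), abs_le]; constructor <;> linarith
  · rw [scale_le (by positivity), abs_le]; constructor <;> linarith
  · rw [scale_le (by positivity), abs_le]; constructor <;> linarith

theorem Q2_mem {t : ℝ} {z : C2} (hz : z ∈ Box 0 (qa t) (qb t)) :
    z ∈ bD ∧ 0 < cc z 2 ∧ t^4 ≤ cc z 0 ∧ cc z 0 ≤ 2*t^4 ∧ |cc z 1| ≤ t^3/16 ∧ |cc z 3| ≤ t^8/16 := by
  obtain ⟨h, h', ha, hb⟩ := hz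
  have a0 := ha 0
  have a1 := ha 1
  have a2 := ha 2
  have b0 := hb 0
  have b1 := hb 1
  have b2 := hb 2
  simp [PL, qa] at a0 a1 a2
  simp [PL, qb] at b0 b1 b2
  exact ⟨h, h', a0, b0, abs_le.2 ⟨by linarith, by linarith⟩, abs_le.2 ⟨by linarith, by linarith⟩⟩

theorem bD_eq {w : C2} (hw : w ∈ bD) : cc w 0^2+cc w 1^4+cc w 2^2+cc w 3^2 = 1 := by
  have : rho w = 0 := hw
  rw [rho_eq, Fin.sum_univ_four] at this
  simp [ex] at this
  linarith

theorem ker_lower {t : ℝ} (ht : 0 < t) (ht' : t ≤ 1/10) {w z : C2} (hw : w ∈ bD)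
    (hz : z ∈ Box 0 (qa t) (qb t)) (h : ph t w ≠ 0) :
    1/(1000*(t^8)^2) ≤ (((Delta w z)^2)⁻¹).re := by
  obtain ⟨d, a, b, c⟩ := ph_ne ht h
  obtain ⟨hzb, z2, z0, z0', z1, z3⟩ := Q2_mem hz
  obtain ⟨⟨k1, k2⟩, k3⟩ := ker_alg ht ht' a b c z0 z0' z1 z3 d z2 (bD_eq hw) (bD_eq hzb)
  refine re_inv_sq (by positivity) ?_ ?_ ?_
  · rw [Delta_re]; exact k1
  · rw [Delta_re]; exact k2
  · rw [Delta_im]; exact k3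

theorem ph_far {t : ℝ} (ht : 0 < t) (ht' : t ≤ 1/10) {z : C2} (hz : z ∈ Box 0 (qa t) (qb t)) :
    ∀ w ∈ Metric.ball z (t^4/2), ph t w = 0 := by
  intro w hw
  by_contra h
  obtain ⟨-, a, -⟩ := ph_ne ht h
  obtain ⟨-, -, z0, -⟩ := Q2_mem hz
  have h1 := cc_le_dist w z 0
  have h2 : dist w z < t^4/2 := hw
  have q4 : 0 < t^4 := by positivity
  have p5 : t^5 ≤ t^4/10 := by
    have := mul_le_mul_of_nonneg_left ht' q4.le
    linarith [show t^4*t = t^5 by ring]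
  rw [abs_le] at a h1
  linarith

theorem FF_lower {t : ℝ} (ht : 0 < t) (ht' : t ≤ 1/10) {z : C2} (hz : z ∈ Box 0 (qa t) (qb t)) :
    1/(32768000*t) ≤ (FF (fun w => ((ph t w : ℝ) : ℂ)) z).re := by
  set g : C2 → ℂ := fun w => ((ph t w : ℝ) : ℂ) with hg
  have hgc : Continuous g := continuous_ofReal.comp (ph_contDiff t).continuous
  have hzb := (Q2_mem hz).1
  have hz' : rho z = 0 := hzb
  have q4 : 0 < t^4 := by positivity
  have hfar := ph_far ht ht' hz
  obtain ⟨M, hM0, hM⟩ := kernel_bound hgc (bD_compact.diff (Metric.isOpen_ball (x := z) (ε := t^4/2)))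
    (isCompact_singleton (x := z)) (by
      intro w hw y hy h0
      rw [mem_singleton_iff] at hy
      subst hy
      have := Delta_ne hw.1 hz'.le (Or.inr (by
        rintro rfl
        exact hw.2 (Metric.mem_ball_self (by positivity))))
      rw [h0] at this
      simp at this)
  have hint : Integrable (fun w => g w / (Delta w z) ^ 2) ((μH[3] : Measure C2).restrict bD) := by
    refine Integrable.of_bound (kernel_meas hgc z _) M ?_
    filter_upwards [ae_restrict_mem bD_closed.measurableSet] with w hw
    by_cases hwb : w ∈ Metric.ball z (t^4/2)
    · simp only [hg, hfar w hwb]; simpa using hM0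
    · exact hM w ⟨hw, hwb⟩ z rfl
  have hre : (FF g z).re = ∫ w in bD, (g w / (Delta w z)^2).re ∂μH[3] := by
    have := integral_re hint
    exact this.symm
  set Q := Box 1 (pa (1/32) t) (pb (1/32) t) with hQ
  have hQm : MeasurableSet Q := Box_meas _ _ _
  have hQs : Q ⊆ bD := fun w hw => hw.1
  have hQmu : ((μH[3] : Measure C2).restrict bD) Q = μH[3] Q := by
    rw [Measure.restrict_apply hQm, inter_eq_left.2 hQs]
  have hQf : μH[3] Q ≠ ⊤ := by rw [← hQmu]; exact measure_ne_top _ _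
  have hpt : ∀ w ∈ bD, Q.indicator (fun _ => 1/(1000*(t^8)^2)) w ≤ (g w / (Delta w z)^2).re := by
    intro w hw
    have e : (g w / (Delta w z)^2).re = ph t w * (((Delta w z)^2)⁻¹).re := by
      rw [div_eq_mul_inv, hg]
      simp
    rw [e]
    by_cases hwQ : w ∈ Q
    · rw [indicator_of_mem hwQ, ph_one ht ht' hwQ, one_mul]
      exact ker_lower ht ht' hw hz (by rw [ph_one ht ht' hwQ]; norm_num)
    · rw [indicator_of_notMem hwQ]
      by_cases h : ph t w = 0
      · simp [h]
      · exact mul_nonneg (ph_nonneg _ _) ((by positivity : (0:ℝ) ≤ 1/(1000*(t^8)^2)).trans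
          (ker_lower ht ht' hw hz h))
  have hmono := integral_mono_ae (μ := (μH[3] : Measure C2).restrict bD)
    ((integrable_const (1/(1000*(t^8)^2))).indicator hQm) hint.re
    (by
      filter_upwards [ae_restrict_mem bD_closed.measurableSet] with w hw
      exact hpt w hw)
  rw [integral_indicator_const _ hQm] at hmono
  rw [hre]
  refine le_trans ?_ hmono
  have hlo : t^15/32768 ≤ ((μH[3] : Measure C2).restrict bD).real Q := by
    rw [Measure.real, hQmu]
    exact (ENNReal.ofReal_le_iff_le_toReal hQf).1 (Q1_lo ht ht')
  rw [smul_eq_mul]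
  refine le_trans ?_ (mul_le_mul_of_nonneg_right hlo (by positivity))
  apply le_of_eq
  field_simp
  norm_num

theorem Cf_eq {g Cf : C2 → ℂ} (hg : Continuous g) (h : IsCLBoundaryValue g Cf) {z : C2} {δ : ℝ}
    (hδ : 0 < δ) (h0 : ∀ w ∈ Metric.ball z δ, g w = 0) (hz : z ∈ bD) : Cf z = FF g z := by
  have h1 : Tendsto (fun ε : ℝ => FF g (z + ε • Nvec z)) (𝓝[>] 0) (𝓝 (Cf z)) := h.tendsto_at hz
  exact tendsto_nhds_unique h1 ((far_limit hg hδ h0 hz).comp (zeps_tendsto hz))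

theorem main_est {p A : ℝ≥0∞} (hp : 1 ≤ p) (hA : ∀ f Cf : C2 → ℂ, ContDiff ℝ 1 f → IsCLBoundaryValue f Cf →
      eLpNorm Cf p (μH[3].restrict bD) ≤ A * eLpNorm f p (μH[3].restrict bD)) {t : ℝ} (ht : 0 < t)
    (ht' : t ≤ 1/10) : ENNReal.ofReal (1/(32768000*t)) ≤ A * 125 := by
  set g : C2 → ℂ := fun w => ((ph t w : ℝ) : ℂ) with hg
  have hgd : ContDiff ℝ 1 g := ofRealCLM.contDiff.comp (ph_contDiff t)
  obtain ⟨Cf, hCf⟩ := part1 hgd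
  have key := hA g Cf hgd hCf
  set ν := (μH[3] : Measure C2).restrict bD with hν
  set Q1 := Box 1 (pa (1/16) t) (pb (1/16) t) with hQ1
  set Q2 := Box 0 (qa t) (qb t) with hQ2
  have m2 : MeasurableSet Q2 := Box_meas _ _ _
  have m1 : MeasurableSet Q1 := Box_meas _ _ _
  have n1 : ν Q1 = μH[3] Q1 := by
    rw [hν, Measure.restrict_apply m1, inter_eq_left.2 (fun w hw => hw.1)]
  have n2 : ν Q2 = μH[3] Q2 := by
    rw [hν, Measure.restrict_apply m2, inter_eq_left.2 (fun w hw => hw.1)]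
  have l2 : ENNReal.ofReal (t^15/512) ≤ ν Q2 := n2 ▸ Q2_lo ht ht'
  have l1 : ν Q1 ≤ 125 * ν Q2 := by
    rw [n1]
    exact (Q1_hi ht ht').trans (by gcongr)
  have z2 : ν Q2 ≠ 0 := by
    intro h
    rw [h, nonpos_iff_eq_zero, ENNReal.ofReal_eq_zero] at l2
    have : 0 < t^15/512 := by positivity
    linarith
  have f2 : ν Q2 ≠ ⊤ := measure_ne_top _ _
  have up : eLpNorm g p ν ≤ ν Q1 ^ (1/p.toReal) := by
    have h1 : eLpNorm g p ν ≤ eLpNorm (Q1.indicator (fun _ => (1:ℝ))) p ν := by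
      refine eLpNorm_mono_ae ?_
      filter_upwards [ae_restrict_mem bD_closed.measurableSet] with w hw
      by_cases hwQ : w ∈ Q1
      · rw [indicator_of_mem hwQ]
        simp [hg, abs_of_nonneg (ph_nonneg t w), ph_le_one t w]
      · have : ph t w = 0 := by
          by_contra h
          exact hwQ (ph_Box ht hw h)
        simp [hg, this]
    refine h1.trans ((eLpNorm_indicator_const_le _ p).trans ?_)
    simp
  set K := 1/(32768000*t) with hK
  have hK0 : 0 ≤ K := by positivity
  have lo : ENNReal.ofReal K * ν Q2 ^ (1/p.toReal) ≤ eLpNorm Cf p ν := by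
    have h1 : eLpNorm (Q2.indicator (fun _ => K)) p ν ≤ eLpNorm Cf p ν := by
      refine eLpNorm_mono_ae (Eventually.of_forall fun z => ?_)
      by_cases hz : z ∈ Q2
      · rw [indicator_of_mem hz, Real.norm_of_nonneg hK0,
          Cf_eq hgd.continuous hCf (δ := t^4/2) (by positivity)
            (fun w hw => by simp [hg, ph_far ht ht' hz w hw]) hz.1]
        exact (FF_lower ht ht' hz).trans (re_le_norm _)
      · rw [indicator_of_notMem hz]; simp
    refine le_trans (le_of_eq ?_) h1
    rw [eLpNorm_indicator_const' m2 z2 (by rintro rfl; simp at hp), Real.enorm_of_nonneg hK0]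
  set q := 1/p.toReal with hq
  have q0 : 0 ≤ q := by positivity
  have q1 : q ≤ 1 := by
    by_cases hpt : p = ⊤
    · simp [hq, hpt]
    · rw [hq]
      have : 1 ≤ p.toReal := by
        have := ENNReal.toReal_mono hpt hp
        simpa using this
      exact (div_le_one (by linarith)).2 this
  have up2 : ν Q1 ^ q ≤ 125 * ν Q2 ^ q := by
    refine (ENNReal.rpow_le_rpow l1 q0).trans ?_
    rw [ENNReal.mul_rpow_of_nonneg _ _ q0]
    gcongr
    exact (ENNReal.rpow_le_rpow_of_exponent_le (by norm_num) q1).trans (by simp)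
  have fin : ENNReal.ofReal K * ν Q2 ^ q ≤ (A * 125) * ν Q2 ^ q := by
    refine lo.trans (key.trans ?_)
    rw [mul_assoc]
    exact mul_le_mul_right (up.trans up2) A
  refine (ENNReal.mul_le_mul_iff_left ?_ ?_).1 fin
  · simp [ENNReal.rpow_eq_zero_iff, z2, f2]
  · simp [ENNReal.rpow_eq_top_iff, z2, f2]

theorem part2 (p : ℝ≥0∞) (hp : 1 ≤ p) : ¬ ∃ A : ℝ≥0∞, A ≠ ⊤ ∧
        ∀ f Cf : C2 → ℂ, ContDiff ℝ 1 f → IsCLBoundaryValue f Cf →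
          eLpNorm Cf p (μH[3].restrict bD) ≤ A * eLpNorm f p (μH[3].restrict bD) := by
  rintro ⟨A, hA, h⟩
  set B := (A * 125).toReal with hB
  have hB0 : 0 ≤ B := ENNReal.toReal_nonneg
  set t : ℝ := 1/(32768000*(B+1)) with ht
  have t0 : 0 < t := by positivity
  have t1 : t ≤ 1/10 := by
    rw [ht]
    apply one_div_le_one_div_of_le (by norm_num); linarith
  have e : 1/(32768000*t) = B+1 := by rw [ht]; field_simp
  have k := main_est hp h t0 t1
  rw [e, ENNReal.ofReal_le_iff_le_toReal (ENNReal.mul_ne_top hA (by norm_num)), ← hB] at k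
  linarith

end Bmp

/-- For `f` the restriction to `bD` of a `C¹` function, the boundary value `𝒞f` of the
Cauchy–Leray integral exists (uniformly in `z ∈ bD`), and for every `p ∈ [1,∞]` there is
no finite constant `A` with `‖𝒞f‖_{L^p(bD,H³)} ≤ A‖f‖_{L^p(bD,H³)}` for all such `f`;
i.e. `f ↦ 𝒞f` does not extend to a bounded operator on `L^p(bD, H³)`. -/
theorem stmt1 :
    (∀ f : C2 → ℂ, ContDiff ℝ 1 f → ∃ Cf : C2 → ℂ, IsCLBoundaryValue f Cf) ∧
    ∀ p : ℝ≥0∞, 1 ≤ p →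
      ¬ ∃ A : ℝ≥0∞, A ≠ ⊤ ∧
        ∀ f Cf : C2 → ℂ, ContDiff ℝ 1 f → IsCLBoundaryValue f Cf →
          eLpNorm Cf p (μH[3].restrict bD) ≤ A * eLpNorm f p (μH[3].restrict bD) := by
  exact ⟨fun f hf => part1 hf, fun p hp => part2 p hp⟩

end
end

section
/- There exists a constant c > 0 such that for all w, z ∈ bD one has 2·Re Δ(w,z) ≥ c·[ (u₁−x₁)² + (u₂−x₂)² + (v₂−y₂)² + (v₁²+y₁²)·(v₁−y₁)² ], where w=(u₁+iv₁, u₂+iv₂) and z=(x₁+iy₁, x₂+iy₂). -/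
open MeasureTheory Complex

noncomputable section

/-- There exists `c > 0` such that for all `w, z ∈ bD`,
`2 Re Δ(w,z) ≥ c·[(u₁−x₁)² + (u₂−x₂)² + (v₂−y₂)² + (v₁²+y₁²)(v₁−y₁)²]`. -/
theorem stmt2 :
    ∃ c : ℝ, 0 < c ∧ ∀ w ∈ bD, ∀ z ∈ bD,
      c * (((w 0).re - (z 0).re) ^ 2 + ((w 1).re - (z 1).re) ^ 2
          + ((w 1).im - (z 1).im) ^ 2
          + ((w 0).im ^ 2 + (z 0).im ^ 2) * ((w 0).im - (z 0).im) ^ 2)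
        ≤ 2 * (Delta w z).re := by
  refine ⟨1/2, by norm_num, ?_⟩
  intro w hw z hz
  simp only [bD, rho, Set.mem_setOf_eq, Complex.sq_norm, Complex.normSq_apply] at hw hz
  have hD : (Delta w z).re = (w 0).re * ((w 0).re - (z 0).re)
      + 2 * (w 0).im ^ 3 * ((w 0).im - (z 0).im)
      + (w 1).re * ((w 1).re - (z 1).re) + (w 1).im * ((w 1).im - (z 1).im) := by
    simp [Delta, ← Complex.ofReal_pow]
    ring
  rw [hD]
  generalize (w 0).re = a at *
  generalize (w 0).im = v at *
  generalize (w 1).re = b at *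
  generalize (w 1).im = d at *
  generalize (z 0).re = x at *
  generalize (z 0).im = y at *
  generalize (z 1).re = p at *
  generalize (z 1).im = q at *
  have h : 0 ≤ (v - y) ^ 2 * ((1/2) * (y + 2 * v) ^ 2 + (1/2) * v ^ 2) := by positivity
  nlinarith [sq_nonneg (a - x), sq_nonneg (b - p), sq_nonneg (d - q)]

end
end

section
/- For every w ∈ bD and every z in the closure of D with z ≠ w, one has Re Δ(w,z) > 0; in particular the Cauchy–Leray denominator Δ(w,z) is nonzero whenever w ∈ bD and z ∈ closure(D) with z ≠ w. -/
open MeasureTheory Complex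

noncomputable section

/-- The domain `D = {ρ < 0}`. -/
def D : Set C2 := {z | rho z < 0}

/-- For every `w ∈ bD` and every `z` in the closure of `D` with `z ≠ w`,
`Re Δ(w,z) > 0`; in particular `Δ(w,z) ≠ 0`. -/
theorem stmt3 (w : C2) (hw : w ∈ bD) (z : C2) (hz : z ∈ closure D) (hzw : z ≠ w) :
    0 < (Delta w z).re ∧ Delta w z ≠ 0 := by
  have hz' : rho z ≤ 0 := by
    have hc : Continuous rho := by unfold rho; fun_prop
    have hcl : IsClosed {z : C2 | rho z ≤ 0} := isClosed_le hc continuous_const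
    have hsub : D ⊆ {z : C2 | rho z ≤ 0} := fun x hx => show rho x ≤ 0 from le_of_lt (show rho x < 0 from hx)
    exact closure_minimal hsub hcl hz
  have hw' : rho w = 0 := hw
  have key : 0 < (Delta w z).re := by
    have hre : (Delta w z).re = (w 0).re * ((w 0).re - (z 0).re)
        + 2 * (w 0).im ^ 3 * ((w 0).im - (z 0).im)
        + ((w 1).re * ((w 1).re - (z 1).re) + (w 1).im * ((w 1).im - (z 1).im)) := by
      unfold Delta
      have e : (((w 0).im : ℂ) ^ 3) = (((w 0).im ^ 3 : ℝ) : ℂ) := by push_cast; rfl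
      rw [e]
      generalize (w 0).im ^ 3 = t
      simp
    have h2 : 2 * (Delta w z).re = rho w - rho z + ((w 0).re - (z 0).re) ^ 2
        + ((w 0).im - (z 0).im) ^ 2 * (((w 0).im + (z 0).im) ^ 2 + 2 * (w 0).im ^ 2)
        + ((w 1).re - (z 1).re) ^ 2 + ((w 1).im - (z 1).im) ^ 2 := by
      rw [hre]
      unfold rho
      rw [Complex.sq_norm, Complex.sq_norm, Complex.normSq_apply, Complex.normSq_apply]
      ring
    by_contra hneg
    have a1 := sq_nonneg ((w 0).re - (z 0).re)
    have a2 : 0 ≤ ((w 0).im - (z 0).im) ^ 2 *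
      (((w 0).im + (z 0).im) ^ 2 + 2 * (w 0).im ^ 2) := by positivity
    have a3 := sq_nonneg ((w 1).re - (z 1).re)
    have a4 := sq_nonneg ((w 1).im - (z 1).im)
    have b1 : ((w 0).re - (z 0).re) ^ 2 = 0 := by linarith
    have b2 : ((w 0).im - (z 0).im) ^ 2 *
      (((w 0).im + (z 0).im) ^ 2 + 2 * (w 0).im ^ 2) = 0 := by linarith
    have b3 : ((w 1).re - (z 1).re) ^ 2 = 0 := by linarith
    have b4 : ((w 1).im - (z 1).im) ^ 2 = 0 := by linarith
    have c1 := sub_eq_zero.1 (pow_eq_zero_iff two_ne_zero |>.1 b1)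
    have c3 := sub_eq_zero.1 (pow_eq_zero_iff two_ne_zero |>.1 b3)
    have c4 := sub_eq_zero.1 (pow_eq_zero_iff two_ne_zero |>.1 b4)
    have c2 : (w 0).im = (z 0).im := by
      rcases mul_eq_zero.1 b2 with h | h
      · exact sub_eq_zero.1 (pow_eq_zero_iff two_ne_zero |>.1 h)
      · have e1 : (w 0).im = 0 := by
          have : (w 0).im ^ 2 = 0 := by
            nlinarith [sq_nonneg ((w 0).im + (z 0).im), sq_nonneg (w 0).im]
          exact pow_eq_zero_iff two_ne_zero |>.1 this
        rw [e1] at h ⊢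
        have : (z 0).im ^ 2 = 0 := by nlinarith
        exact (pow_eq_zero_iff two_ne_zero |>.1 this).symm
    apply hzw
    ext i
    fin_cases i
    · exact Complex.ext c1.symm c2.symm
    · exact Complex.ext c3.symm c4.symm
  refine ⟨key, fun h => ?_⟩
  rw [h] at key
  simp at key

end
end

section
/- Let ρ : ℂ² → ℝ be twice continuously differentiable with ρ(0)=0, ∂ρ/∂u₁(0)=∂ρ/∂v₁(0)=∂ρ/∂u₂(0)=0 and ∂ρ/∂v₂(0) = |∇ρ(0)| > 0 (coordinates w=(u₁+iv₁, u₂+iv₂)). Let Φ : ℝ³ → ℝ be continuously differentiable with Φ(0,0,0)=0, ∇Φ(0,0,0)=(0,0,0), and suppose ρ(u₁+iv₁, u₂+iΦ(u₁,v₁,u₂)) = 0 for all (u₁,v₁,u₂) in a neighborhood of the origin (so {ρ=0} is locally the graph v₂=Φ(u₁,v₁,u₂)). Define Δ(w,z) = Σ_{j=1}^{2} (∂ρ/∂w_j)(w)·(w_j−z_j), where ∂/∂w_j = (∂/∂u_j − i ∂/∂v_j)/2. Then there exist δ > 0 and c₁ > 0 such that for all (u₁,v₁,u₂) ∈ ℝ³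 with |(u₁,v₁,u₂)| < δ, setting w = (u₁+iv₁, u₂+iΦ(u₁,v₁,u₂)), and all z ∈ ℂ² with |z| < δ, the partial derivative with respect to u₂ of the map (u₁,v₁,u₂) ↦ Δ(w(u₁,v₁,u₂), z) has absolute value at least c₁; in particular it is nonzero. -/
open Complex

noncomputable section

/-- The complex partial derivatives `∂ρ/∂w_j = (∂ρ/∂u_j − i ∂ρ/∂v_j)/2` of a real function
`ρ` on `ℂ²`, assembled into the Cauchy–Leray denominator
`Δ(w,z) = Σ_j (∂ρ/∂w_j)(w)·(w_j − z_j)`. -/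
def CLDelta (ρ : ℂ × ℂ → ℝ) (w z : ℂ × ℂ) : ℂ :=
  ((fderiv ℝ ρ w (1, 0) : ℂ) - I * (fderiv ℝ ρ w (I, 0) : ℂ)) / 2 * (w.1 - z.1)
    + ((fderiv ℝ ρ w (0, 1) : ℂ) - I * (fderiv ℝ ρ w (0, I) : ℂ)) / 2 * (w.2 - z.2)

/-- Let `ρ : ℂ² → ℝ` be `C²` with `ρ(0) = 0`, with vanishing partials
`∂ρ/∂u₁(0) = ∂ρ/∂v₁(0) = ∂ρ/∂u₂(0) = 0` and `∂ρ/∂v₂(0) = |∇ρ(0)| > 0`, and let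
`Φ : ℝ³ → ℝ` be `C¹` with `Φ(0) = 0`, `∇Φ(0) = 0`, and
`ρ(u₁+iv₁, u₂+iΦ(u₁,v₁,u₂)) = 0` near the origin (so `{ρ = 0}` is locally the graph
`v₂ = Φ(u₁,v₁,u₂)`). Then there are `δ > 0` and `c₁ > 0` such that for all
`(u₁,v₁,u₂)` with `|(u₁,v₁,u₂)| < δ` and all `z` with `|z| < δ`, the partial derivative
in `u₂` of `(u₁,v₁,u₂) ↦ Δ(w(u₁,v₁,u₂), z)` has absolute value at least `c₁`;
in particular it is nonzero. -/
theorem stmt4 (ρ : ℂ × ℂ → ℝ) (hρ : ContDiff ℝ 2 ρ) (hρ0 : ρ 0 = 0)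
    (hu1 : fderiv ℝ ρ 0 (1, 0) = 0)
    (hv1 : fderiv ℝ ρ 0 (I, 0) = 0)
    (hu2 : fderiv ℝ ρ 0 (0, 1) = 0)
    (hv2 : 0 < fderiv ℝ ρ 0 (0, I))
    (Φ : ℝ × ℝ × ℝ → ℝ) (hΦ : ContDiff ℝ 1 Φ)
    (hΦ0 : Φ 0 = 0) (hΦd : fderiv ℝ Φ 0 = 0)
    (hgraph : ∀ᶠ p in nhds (0 : ℝ × ℝ × ℝ),
      ρ ((p.1 : ℂ) + p.2.1 * I, (p.2.2 : ℂ) + (Φ p : ℂ) * I) = 0) :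
    ∃ δ c₁ : ℝ, 0 < δ ∧ 0 < c₁ ∧
      ∀ p : ℝ × ℝ × ℝ, ‖p‖ < δ → ∀ z : ℂ × ℂ, ‖z‖ < δ →
        c₁ ≤ ‖deriv (fun t : ℝ =>
            CLDelta ρ ((p.1 : ℂ) + p.2.1 * I,
              (t : ℂ) + (Φ (p.1, p.2.1, t) : ℂ) * I) z) p.2.2‖ := by
  have hρ' : ContDiff ℝ 1 (fderiv ℝ ρ) := hρ.fderiv_right (by norm_num)
  have hof : ContDiff ℝ 1 (fun x : ℝ => (x : ℂ)) := Complex.ofRealCLM.contDiff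
  set W : (ℝ × ℝ × ℝ) → ℂ × ℂ := fun p =>
    ((p.1 : ℂ) + p.2.1 * I, (p.2.2 : ℂ) + (Φ p : ℂ) * I) with hW
  have hWc : ContDiff ℝ 1 W := by
    refine ContDiff.prodMk ?_ ?_
    · exact (hof.comp contDiff_fst).add
        ((hof.comp (contDiff_fst.comp contDiff_snd)).mul contDiff_const)
    · exact (hof.comp (contDiff_snd.comp contDiff_snd)).add
        ((hof.comp hΦ).mul contDiff_const)
  have hD : ∀ v : ℂ × ℂ, ContDiff ℝ 1
      (fun q : (ℝ × ℝ × ℝ) × (ℂ × ℂ) => ((fderiv ℝ ρ (W q.1) v : ℝ) : ℂ)) := by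
    intro v
    exact hof.comp ((hρ'.comp (hWc.comp contDiff_fst)).clm_apply contDiff_const)
  set F : (ℝ × ℝ × ℝ) × (ℂ × ℂ) → ℂ := fun q => CLDelta ρ (W q.1) q.2 with hF
  have hFc : ContDiff ℝ 1 F := by
    have h1 : ContDiff ℝ 1 (fun q : (ℝ × ℝ × ℝ) × (ℂ × ℂ) => W q.1) :=
      hWc.comp contDiff_fst
    have h2 : ContDiff ℝ 1 (fun q : (ℝ × ℝ × ℝ) × (ℂ × ℂ) => q.2) := contDiff_snd
    simp only [hF, CLDelta]
    exact ((((hD (1, 0)).sub (contDiff_const.mul (hD (I, 0)))).div_const 2).mul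
        (h1.fst.sub h2.fst)).add
      ((((hD (0, 1)).sub (contDiff_const.mul (hD (0, I)))).div_const 2).mul
        (h1.snd.sub h2.snd))
  have hder : ∀ (p : ℝ × ℝ × ℝ) (z : ℂ × ℂ),
      HasDerivAt (fun t : ℝ =>
            CLDelta ρ ((p.1 : ℂ) + p.2.1 * I,
              (t : ℂ) + (Φ (p.1, p.2.1, t) : ℂ) * I) z)
        (fderiv ℝ F (p, z) ((0, 0, 1), 0)) p.2.2 := by
    intro p z
    have hc : HasDerivAt (fun t : ℝ => (((p.1, p.2.1, t) : ℝ × ℝ × ℝ), z))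
        ((0, 0, 1), 0) p.2.2 :=
      ((hasDerivAt_const _ _).prodMk ((hasDerivAt_const _ _).prodMk (hasDerivAt_id _))).prodMk
        (hasDerivAt_const _ _)
    have hf : HasFDerivAt F (fderiv ℝ F (p, z)) (((p.1, p.2.1, p.2.2) : ℝ × ℝ × ℝ), z) :=
      ((hFc.differentiable (by norm_num)) (p, z)).hasFDerivAt
    exact hf.comp_hasDerivAt p.2.2 hc
  have hcont : Continuous (fun q => ‖fderiv ℝ F q ((0, 0, 1), 0)‖) :=
    ((hFc.continuous_fderiv (by norm_num)).clm_apply continuous_const).norm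
  have hval : fderiv ℝ F 0 ((0, 0, 1), 0) = -I * (fderiv ℝ ρ 0 (0, I) : ℂ) / 2 := by
    have hW0 : W 0 = 0 := by simp [hW, hΦ0]
    have hc : HasDerivAt (fun t : ℝ => ((0, 0, t) : ℝ × ℝ × ℝ)) (0, 0, 1) 0 :=
      (hasDerivAt_const _ _).prodMk ((hasDerivAt_const _ _).prodMk (hasDerivAt_id _))
    have hΦ' : HasDerivAt (fun t : ℝ => Φ (0, 0, t)) 0 0 := by
      have hf : HasFDerivAt Φ (fderiv ℝ Φ 0) (((0, 0, (0:ℝ)) : ℝ × ℝ × ℝ)) :=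
        ((hΦ.differentiable (by norm_num)) 0).hasFDerivAt
      have := hf.comp_hasDerivAt (0:ℝ) hc
      rw [hΦd] at this
      exact this
    have hB : DifferentiableAt ℝ (fun t : ℝ =>
        ((fderiv ℝ ρ (W (0, 0, t)) (0, 1) : ℂ) - I * (fderiv ℝ ρ (W (0, 0, t)) (0, I) : ℂ)) / 2)
        0 := by
      have h := (((hD (0, 1)).sub ((contDiff_const (c := I)).mul (hD (0, I)))).div_const (2:ℂ)
        |>.differentiable (by norm_num)) (((0, 0, (0:ℝ)) : ℝ × ℝ × ℝ), (0 : ℂ × ℂ))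
      have hc2 : DifferentiableAt ℝ (fun t : ℝ => (((0, 0, t) : ℝ × ℝ × ℝ), (0 : ℂ × ℂ))) 0 :=
        hc.differentiableAt.prodMk (differentiableAt_const _)
      exact (h.hasFDerivAt.comp_hasDerivAt (0:ℝ) hc2.hasDerivAt).differentiableAt
    have hS : HasDerivAt (fun t : ℝ => (t : ℂ) + (Φ (0, 0, t) : ℂ) * I) (1 + (0 : ℝ) * I) 0 :=
      (hasDerivAt_id (0:ℝ)).ofReal_comp.add (hΦ'.ofReal_comp.mul_const I)
    have hprod := hB.hasDerivAt.mul hS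
    have h0 := hder 0 0
    have hW00 : W (0, 0, 0) = 0 := hW0
    have hΦ00 : Φ (0, 0, 0) = 0 := hΦ0
    have heq := h0.unique (hprod.congr_of_eventuallyEq (Filter.Eventually.of_forall fun t => by
      simp [CLDelta, hW]))
    rw [Prod.mk_zero_zero] at heq
    rw [heq]
    simp [hW00, hΦ00, hu2]
  have hpos : 0 < fderiv ℝ ρ 0 (0, I) / 4 := by positivity
  have hlt : fderiv ℝ ρ 0 (0, I) / 4 < ‖fderiv ℝ F 0 ((0, 0, 1), 0)‖ := by
    rw [hval]
    simp only [norm_div, norm_mul, norm_neg, Complex.norm_I, Complex.norm_real,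
      Real.norm_of_nonneg hv2.le, Complex.norm_ofNat]
    linarith
  have hev := hcont.continuousAt.eventually (lt_mem_nhds hlt)
  obtain ⟨δ, hδ, hball⟩ := Metric.eventually_nhds_iff.1 hev
  refine ⟨δ, _, hδ, hpos, fun p hp z hz => ?_⟩
  rw [(hder p z).deriv]
  refine (hball ?_).le
  rw [dist_zero_right, Prod.norm_def]
  exact max_lt hp hz

end
end

section
/- There exist constants c₀ ∈ (0,1) and ε₀ > 0 such that for all z, w ∈ bD and all 0 < ε < ε₀: Re Δ(w, z+εN(z)) ≥ c₀·( ε + Re Δ(w,z) ). -/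
open MeasureTheory Complex

noncomputable section

lemma aux_bdd {x y a b : ℝ} (h : a ^ 2 + b ^ 2 + x ^ 2 + y ^ 4 - 1 = 0) :
    y ^ 2 ≤ 1 := by
  nlinarith [sq_nonneg a, sq_nonneg b, sq_nonneg x, sq_nonneg (y ^ 2 - 1)]

lemma aux_lo {x y a b : ℝ} (h : a ^ 2 + b ^ 2 + x ^ 2 + y ^ 4 - 1 = 0) :
    0.9 ≤ x ^ 2 + 4 * y ^ 6 + a ^ 2 + b ^ 2 := by
  have h1 : 0 ≤ y ^ 2 * (y ^ 2 - 1 / 8) ^ 2 := by positivity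
  nlinarith [sq_nonneg (y ^ 2), sq_nonneg y]

lemma aux_hi {x y a b : ℝ} (h : a ^ 2 + b ^ 2 + x ^ 2 + y ^ 4 - 1 = 0) :
    x ^ 2 + 4 * y ^ 6 + a ^ 2 + b ^ 2 ≤ 4 := by
  have h1 := aux_bdd h
  have h2 : 0 ≤ y ^ 4 * (1 - y ^ 2) := mul_nonneg (by positivity) (by linarith)
  have h3 : 0 ≤ y ^ 2 * (1 - y ^ 2) := mul_nonneg (by positivity) (by linarith)
  nlinarith

lemma aux_one {v y : ℝ} (hv : v ^ 2 ≤ 1) (hy : y ^ 2 ≤ 1) :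
    (2 * v ^ 3 - 2 * y ^ 3) ^ 2 ≤ 24 * (y ^ 4 - v ^ 4 - 4 * v ^ 3 * (y - v)) := by
  have e1 : (2 * v ^ 3 - 2 * y ^ 3) ^ 2 = (y - v) ^ 2 * (4 * (y ^ 2 + y * v + v ^ 2) ^ 2) := by ring
  have e2 : 24 * (y ^ 4 - v ^ 4 - 4 * v ^ 3 * (y - v))
      = (y - v) ^ 2 * (24 * (y ^ 2 + 2 * y * v + 3 * v ^ 2)) := by ring
  rw [e1, e2]
  apply mul_le_mul_of_nonneg_left _ (sq_nonneg _)
  have h0 : 0 ≤ y ^ 2 + y * v + v ^ 2 := by nlinarith [sq_nonneg (y + v), sq_nonneg y, sq_nonneg v]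
  have h3 : y ^ 2 + y * v + v ^ 2 ≤ 3 := by nlinarith [sq_nonneg (y - v)]
  have h4 : y ^ 2 + y * v + v ^ 2 ≤ 2 * (y ^ 2 + 2 * y * v + 3 * v ^ 2) := by
    nlinarith [sq_nonneg (y + 3 / 2 * v), sq_nonneg v]
  nlinarith [mul_nonneg h0 (sub_nonneg.2 h3)]

lemma aux_main {x y a b u v p q D G : ℝ}
    (hz : a ^ 2 + b ^ 2 + x ^ 2 + y ^ 4 - 1 = 0)
    (hw : p ^ 2 + q ^ 2 + u ^ 2 + v ^ 4 - 1 = 0)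
    (hD : D = u * (u - x) + 2 * v ^ 3 * (v - y) + p * (p - a) + q * (q - b))
    (hG : G = u * x + 4 * v ^ 3 * y ^ 3 + p * a + q * b) :
    0 ≤ D ∧ 0.9 - 24 * D ≤ G := by
  have h1 := aux_one (aux_bdd hw) (aux_bdd hz)
  have e : 2 * D = (u - x) ^ 2 + (p - a) ^ 2 + (q - b) ^ 2
      + (y ^ 4 - v ^ 4 - 4 * v ^ 3 * (y - v)) := by
    rw [hD]; linear_combination hw - hz
  have h2 := aux_lo hz
  have h3 := aux_lo hw
  have s1 := sq_nonneg (u - x)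
  have s2 := sq_nonneg (p - a)
  have s3 := sq_nonneg (q - b)
  have s4 := sq_nonneg (2 * v ^ 3 - 2 * y ^ 3)
  have e2 : 2 * G = (x ^ 2 + 4 * y ^ 6 + a ^ 2 + b ^ 2) + (u ^ 2 + 4 * v ^ 6 + p ^ 2 + q ^ 2)
     - ((u - x) ^ 2 + (p - a) ^ 2 + (q - b) ^ 2 + (2 * v ^ 3 - 2 * y ^ 3) ^ 2) := by
    rw [hG]; ring
  constructor
  · linarith
  · linarith

lemma aux_bD {z : C2} (hz : z ∈ bD) :
    (z 1).re ^ 2 + (z 1).im ^ 2 + (z 0).re ^ 2 + (z 0).im ^ 4 - 1 = 0 := by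
  have h : rho z = 0 := hz
  rw [rho, ← Complex.normSq_eq_norm_sq, Complex.normSq_apply] at h
  linarith

lemma im_ofReal_cube (v : ℝ) : (((v : ℂ) ^ 3).re = v ^ 3) ∧ (((v : ℂ) ^ 3).im = 0) := by
  rw [← Complex.ofReal_pow]; simp only [Complex.ofReal_re, Complex.ofReal_im, and_self]

lemma aux_delta (w z : C2) : (Delta w z).re =
    (w 0).re * ((w 0).re - (z 0).re) + 2 * (w 0).im ^ 3 * ((w 0).im - (z 0).im)
     + (w 1).re * ((w 1).re - (z 1).re) + (w 1).im * ((w 1).im - (z 1).im) := by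
  obtain ⟨h1, h2⟩ := im_ofReal_cube (w 0).im
  simp [Delta, h1, h2]
  ring

lemma aux_grad0 (z : C2) : (gradRho z) 0 = ⟨2 * (z 0).re, 4 * (z 0).im ^ 3⟩ := by
  have : (gradRho z) 0 = (2 * (z 0).re : ℝ) + (4 * (z 0).im ^ 3 : ℝ) * I := rfl
  rw [this, ← Complex.mk_eq_add_mul_I]

lemma aux_grad1 (z : C2) : (gradRho z) 1 = ⟨2 * (z 1).re, 2 * (z 1).im⟩ := by
  have : (gradRho z) 1 = 2 * z 1 := rfl
  rw [this]; apply Complex.ext <;> simp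

lemma aux_norm (z : C2) : ‖gradRho z‖ ^ 2 =
    4 * ((z 0).re ^ 2 + 4 * (z 0).im ^ 6 + (z 1).re ^ 2 + (z 1).im ^ 2) := by
  rw [EuclideanSpace.norm_sq_eq, Fin.sum_univ_two, aux_grad0, aux_grad1,
    ← Complex.normSq_eq_norm_sq, ← Complex.normSq_eq_norm_sq, Complex.normSq_apply,
    Complex.normSq_apply]
  ring

lemma aux_shift (w z : C2) (ε : ℝ) : (Delta w (z + ε • Nvec z)).re =
    (Delta w z).re + ε * (2 * ‖gradRho z‖⁻¹ * ((w 0).re * (z 0).re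
      + 4 * (w 0).im ^ 3 * (z 0).im ^ 3 + (w 1).re * (z 1).re + (w 1).im * (z 1).im)) := by
  rw [aux_delta, aux_delta]
  have h (i : Fin 2) : (z + ε • Nvec z) i
      = z i + ((ε * -‖gradRho z‖⁻¹ : ℝ) : ℂ) * (gradRho z) i := by
    simp [Nvec]
    ring
  rw [h, h, aux_grad0, aux_grad1]
  simp only [Complex.add_re, Complex.add_im, Complex.re_ofReal_mul, Complex.im_ofReal_mul]
  ring

/-- There exist `c₀ ∈ (0,1)` and `ε₀ > 0` such that for all `z, w ∈ bD` and `0 < ε < ε₀`: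
`Re Δ(w, z+εN(z)) ≥ c₀(ε + Re Δ(w,z))`. -/
theorem stmt5 :
    ∃ c₀ ε₀ : ℝ, 0 < c₀ ∧ c₀ < 1 ∧ 0 < ε₀ ∧
      ∀ z ∈ bD, ∀ w ∈ bD, ∀ ε : ℝ, 0 < ε → ε < ε₀ →
        c₀ * (ε + (Delta w z).re) ≤ (Delta w (z + ε • Nvec z)).re := by
  refine ⟨0.4, 0.01, by norm_num, by norm_num, by norm_num, ?_⟩
  intro z hz w hw ε h0 h1
  have bz := aux_bD hz
  have bw := aux_bD hw
  obtain ⟨hD, hG⟩ := aux_main bz bw (aux_delta w z) rfl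
  rw [aux_shift]
  set D := (Delta w z).re
  set G := (w 0).re * (z 0).re
      + 4 * (w 0).im ^ 3 * (z 0).im ^ 3 + (w 1).re * (z 1).re + (w 1).im * (z 1).im
  have hn := aux_norm z
  have hlo := aux_lo bz
  have hhi := aux_hi bz
  have hM0 := norm_nonneg (gradRho z)
  set M := ‖gradRho z‖
  have hM1 : 1.8 ≤ M := by nlinarith
  have hM2 : M ≤ 4 := by nlinarith
  have hMp : 0 < M := by linarith
  have t1 : (1 / 4 : ℝ) ≤ M⁻¹ := by
    rw [← one_div]; exact one_div_le_one_div_of_le hMp hM2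
  have t2 : M⁻¹ ≤ 1 / 1.8 := by
    rw [← one_div]; exact one_div_le_one_div_of_le (by norm_num) hM1
  have t3 : M⁻¹ ≤ 0.6 := t2.trans (by norm_num)
  generalize M⁻¹ = t at *
  have k : 0.45 - 30 * D ≤ 2 * t * G := by
    have k1 : 2 * t * (0.9 - 24 * D) ≤ 2 * t * G :=
      mul_le_mul_of_nonneg_left hG (by linarith)
    nlinarith [mul_nonneg hD (sub_nonneg.2 t3)]
  have k2 := mul_le_mul_of_nonneg_left k h0.le
  nlinarith [mul_nonneg hD (sub_nonneg.2 h1.le)]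

end
end
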